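/- For every ε, δ > 0 and every U ⊆ (B_2^n)^{d−1} × T: (1) N( U, ρ_A, W^U_d(α_A, ε) + V^U_d(β_A, ε) ) ≤ exp( C(d) ε^{−2} ); and (2) √(log N(U, ρ_A, δ)) ≤ C(d) [ Σ_{k=1}^{d−1} ( Σ_{I⊆{2,...,d}, |I|=k} W^U_I(α_A) )^{1/k} δ^{−1/k} + Σ_{k=0}^{d−1} ( Σ_{I⊆{2,...,d}, |I|=k} V^U_I(β_A) )^{1/(k+1)} δ^{−1/(k+1)} ], where C(d) depends only on d. -/

import Mathlib

/-!
Both parts follow from one packing bound for `ρ_A`. Let `S ⊆ U` be separated at a scale comparable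
to `W_d(ε) + V_d(ε)`. Each `z = (x, t) ∈ S` is assigned the event that a Gaussian vector `G` satisfies
`G - ε⁻¹ x ∈ K_z`. Here `K_z` (`goodSet`) is the set of `ω` for which the values of `α_A` and `β_A` on
all mixed tensors, with `ω^k` in the slots `k ∈ I` and `x^k` in the others, are at most a constant
times `W^U_I` and `V^U_I`. By Markov's inequality `K_z` has Gaussian measure at least `1/2`, and it
is symmetric because changing `ω` to `-ω` multiplies each mixed tensor by a sign. Hence the event has
probability at least `exp (-d ε⁻² / 2) / 2` (`gaussian_shift`).

Expanding `⊗ (x^k + ε ω^k)` multilinearly shows that on this event `y = ε G` satisfies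
`α_A ((⊗ y^k - ⊗ x^k) ⊗ t) ≲ W_d(ε)` and `ε β_A (⊗ y^k) ≲ V_d(ε)`. If many of the events meet at one
point `y`, the components `t` of the corresponding points of `S` are therefore `V_d(ε)`-separated for
the metric `α_A (⊗ y^k ⊗ ·)`. Its Gaussian width on `T` is `β_A (⊗ y^k) ≲ ε⁻¹ V_d(ε)`, so that
Sudakov's minoration leaves room for at most `exp (1024 ε⁻²)` of them (`packing_bound`). Sudakov's
minoration itself is derived from `gaussian_shift`: translates of a sublevel set of the support
function are disjoint, which bounds packings of balls of comparable radius, and these local bounds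
are iterated over dyadic scales (`SuppFn.sudakov`).

A maximal packing is a net. The constants in the radius are absorbed by rescaling `ε`, and the factor
`2` in the cardinality by `exp (256 ε⁻²)` for `ε ≤ 16`; for larger `ε` a single ball suffices, since
`α_A (⊗ x^k ⊗ t) ≤ 8 β_A (⊗ x^k)` for `t ∈ T`. This is `exists_cover`, which gives the first part. For
the second part let `Q` be the bracket on the right-hand side: with `ε = 1 / ((2 d + 1) Q)` each of
the `2 d + 1` summands of `W_d(ε) + V_d(ε)` is at most `δ / (2 d + 1)`, so the first part applies at
scale `δ`.
-/

open MeasureTheory ProbabilityTheory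
open scoped Classical

noncomputable section

/-- product of i.i.d. standard Gaussians indexed by `ι`. -/
def stdGaussian (ι : Type*) [Fintype ι] : Measure (ι → ℝ) :=
  Measure.pi fun _ => gaussianReal 0 1

/-- Index type for block Gaussians. -/
abbrev GIdx (d n : ℕ) := Σ J : Finset (Fin d), ({l // l ∈ J} → Fin n)

def IsPartition {d : ℕ} (J : Finset (Fin d)) (P : Finset (Finset (Fin d))) : Prop :=
  (∀ I ∈ P, I.Nonempty) ∧ (∀ I ∈ P, ∀ I' ∈ P, I ≠ I' → Disjoint I I') ∧ P.sup id = J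

def IsPartitionPair {d : ℕ} (S : Finset (Fin d)) (P P' : Finset (Finset (Fin d))) : Prop :=
  Disjoint P P' ∧ IsPartition S (P ∪ P')

/-- nonzero coordinates of `Fin (d+1)`: the coordinates `2,…,d` of the paper. -/
abbrev PIdx (d : ℕ) : Type := {k : Fin (d + 1) // k ≠ 0}

/-- a point of `(ℝ^n)^{d-1} × ℝ^m`. -/
abbrev Pt (n m d : ℕ) : Type := (PIdx d → Fin n → ℝ) × (Fin m → ℝ)

/-- assembling a full multi-index out of its first coordinate and the rest. -/
def ext0 {n d : ℕ} (i1 : Fin n) (i' : PIdx d → Fin n) : Fin (d + 1) → Fin n :=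
  fun k => if h : k = 0 then i1 else i' ⟨k, h⟩

/-- `‖A‖_{P'∣P}` for an array with values indexed by `Fin m`, relative to `T ⊆ ℝ^m`. -/
def chaosNormT {n m d : ℕ} (A : (Fin (d + 1) → Fin n) → Fin m → ℝ)
    (T : Set (Fin m → ℝ)) (P' P : Finset (Finset (Fin (d + 1)))) : ℝ :=
  sSup { r : ℝ | ∃ x : (I : Finset (Fin (d + 1))) → ({l // l ∈ I} → Fin n) → ℝ,
    (∀ I ∈ P, ∑ v : {l // l ∈ I} → Fin n, x I v ^ 2 ≤ 1) ∧
    r = ∫ ω : GIdx (d + 1) n → ℝ,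
        sSup { s : ℝ | ∃ t ∈ T, s = ∑ i : Fin (d + 1) → Fin n, ∑ j : Fin m,
          (∏ I ∈ P, x I fun l => i l.1) * (∏ J ∈ P', ω ⟨J, fun l => i l.1⟩) *
            A i j * t j }
        ∂ stdGaussian (GIdx (d + 1) n) }

/-- `s_k(A)`. -/
def sNorm {n m d : ℕ} (A : (Fin (d + 1) → Fin n) → Fin m → ℝ)
    (T : Set (Fin m → ℝ)) (k : ℕ) : ℝ :=
  ∑ PP ∈ Finset.univ.filter (fun PP :
      Finset (Finset (Fin (d + 1))) × Finset (Finset (Fin (d + 1))) =>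
      IsPartitionPair Finset.univ PP.1 PP.2 ∧ PP.1.card = k),
    chaosNormT A T PP.2 PP.1

/-- the pseudometric `ρ_A`. -/
def rhoA {n m d : ℕ} (A : (Fin (d + 1) → Fin n) → Fin m → ℝ) (z w : Pt n m d) : ℝ :=
  Real.sqrt (∑ i1 : Fin n,
    (∑ i' : PIdx d → Fin n, ∑ j : Fin m, A (ext0 i1 i') j *
      ((∏ k, w.1 k (i' k)) * w.2 j - (∏ k, z.1 k (i' k)) * z.2 j)) ^ 2)

/-- `N(S, ρ, ε)`: the minimal number of closed balls of diameter `ε` (radius `ε/2`)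
covering `S`. -/
def covNum {β : Type*} (S : Set β) (ρ : β → β → ℝ) (ε : ℝ) : ℝ :=
  sInf { N : ℝ | ∃ c : Finset β, (c.card : ℝ) = N ∧
    S ⊆ ⋃ x ∈ c, { y | ρ x y ≤ ε / 2 } }

/-- `F_A(U)`. -/
def FA {n m d : ℕ} (A : (Fin (d + 1) → Fin n) → Fin m → ℝ) (U : Set (Pt n m d)) : ℝ :=
  ∫ ω : Fin n → ℝ, sSup { s : ℝ | ∃ z ∈ U,
      s = ∑ i : Fin (d + 1) → Fin n, ∑ j : Fin m,
        ω (i 0) * (∏ k : PIdx d, z.1 k (i k.1)) * A i j * z.2 j }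
    ∂ stdGaussian (Fin n)

/-- `Δ_A(U)`, the diameter of `U` with respect to `ρ_A`. -/
def DeltaA {n m d : ℕ} (A : (Fin (d + 1) → Fin n) → Fin m → ℝ)
    (U : Set (Pt n m d)) : ℝ :=
  sSup { r : ℝ | ∃ z ∈ U, ∃ w ∈ U, r = rhoA A z w }

/-- `(B_2^n)^{d-1} × T`. -/
def ballSet (n m d : ℕ) (T : Set (Fin m → ℝ)) : Set (Pt n m d) :=
  { z | (∀ k, ∑ j, z.1 k j ^ 2 ≤ 1) ∧ z.2 ∈ T }

/-- `W^U_I(α_A)`. -/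
def WUI {n m d : ℕ} (A : (Fin (d + 1) → Fin n) → Fin m → ℝ)
    (U : Set (Pt n m d)) (I : Finset (PIdx d)) : ℝ :=
  sSup { r : ℝ | ∃ z ∈ U, r = ∫ ω : PIdx d × Fin n → ℝ,
    Real.sqrt (∑ i1 : Fin n, (∑ i' : PIdx d → Fin n, ∑ j : Fin m,
      A (ext0 i1 i') j *
        (∏ k : PIdx d, if k ∈ I then ω (k, i' k) else z.1 k (i' k)) * z.2 j) ^ 2)
    ∂ stdGaussian (PIdx d × Fin n) }

/-- `V^U_I(β_A)`. -/
def VUI {n m d : ℕ} (A : (Fin (d + 1) → Fin n) → Fin m → ℝ)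
    (T : Set (Fin m → ℝ)) (U : Set (Pt n m d)) (I : Finset (PIdx d)) : ℝ :=
  sSup { r : ℝ | ∃ z ∈ U, r = ∫ ω : PIdx d × Fin n → ℝ,
    (∫ g : Fin n → ℝ, sSup { s : ℝ | ∃ t' ∈ T,
        s = ∑ i1 : Fin n, ∑ i' : PIdx d → Fin n, ∑ j : Fin m,
          A (ext0 i1 i') j * g i1 *
            (∏ k : PIdx d, if k ∈ I then ω (k, i' k) else z.1 k (i' k)) * t' j }
      ∂ stdGaussian (Fin n))
    ∂ stdGaussian (PIdx d × Fin n) }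

/-- `W^U_d(α_A, s)`. -/
def Wd {n m d : ℕ} (A : (Fin (d + 1) → Fin n) → Fin m → ℝ)
    (U : Set (Pt n m d)) (s : ℝ) : ℝ :=
  ∑ k ∈ Finset.Icc 1 d, s ^ k *
    ∑ I ∈ Finset.univ.filter (fun I : Finset (PIdx d) => I.card = k), WUI A U I

/-- `V^U_d(β_A, s)`. -/
def Vd {n m d : ℕ} (A : (Fin (d + 1) → Fin n) → Fin m → ℝ)
    (T : Set (Fin m → ℝ)) (U : Set (Pt n m d)) (s : ℝ) : ℝ :=
  ∑ k ∈ Finset.range (d + 1), s ^ (k + 1) *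
    ∑ I ∈ Finset.univ.filter (fun I : Finset (PIdx d) => I.card = k), VUI A T U I

/-- `‖A ⋅_j x_j‖_{P'∣P}`: the norm of the contraction of `A` in coordinate `j0`
against the vector `xj`. -/
def chaosNormTFix {n m d : ℕ} (A : (Fin (d + 1) → Fin n) → Fin m → ℝ)
    (T : Set (Fin m → ℝ)) (P' P : Finset (Finset (Fin (d + 1))))
    (j0 : Fin (d + 1)) (xj : Fin n → ℝ) : ℝ :=
  sSup { r : ℝ | ∃ x : (I : Finset (Fin (d + 1))) → ({l // l ∈ I} → Fin n) → ℝ,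
    (∀ I ∈ P, ∑ v : {l // l ∈ I} → Fin n, x I v ^ 2 ≤ 1) ∧
    r = ∫ ω : GIdx (d + 1) n → ℝ,
        sSup { s : ℝ | ∃ t ∈ T, s = ∑ i : Fin (d + 1) → Fin n, ∑ j : Fin m,
          (∏ I ∈ P, x I fun l => i l.1) * xj (i j0) *
            (∏ J ∈ P', ω ⟨J, fun l => i l.1⟩) * A i j * t j }
        ∂ stdGaussian (GIdx (d + 1) n) }

/-- the norm `α̂_A`. -/
def hatAlpha {n m d : ℕ} (A : (Fin (d + 1) → Fin n) → Fin m → ℝ)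
    (T : Set (Fin m → ℝ)) (x : PIdx d → Fin n → ℝ) : ℝ :=
  ∑ j : PIdx d,
    ∑ PP ∈ Finset.univ.filter (fun PP :
        Finset (Finset (Fin (d + 1))) × Finset (Finset (Fin (d + 1))) =>
        IsPartitionPair (Finset.univ.erase j.1) PP.1 PP.2 ∧ PP.1.card = d - 1),
      chaosNormTFix A T PP.2 PP.1 j.1 (x j)

/-- `α̂_A(U)`. -/
def hatAlphaSup {n m d : ℕ} (A : (Fin (d + 1) → Fin n) → Fin m → ℝ)
    (T : Set (Fin m → ℝ)) (U : Set (Pt n m d)) : ℝ :=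
  sSup { r : ℝ | ∃ z ∈ U, r = hatAlpha A T z.1 }

end


/-! ### Gaussian measure of shifted symmetric sets -/

instance stdGaussian_isProb (ι : Type*) [Fintype ι] :
    IsProbabilityMeasure (_root_.stdGaussian ι) := by
  unfold _root_.stdGaussian; infer_instance

lemma stdGaussian_eq_withDensity (ι : Type*) [Fintype ι] :
    _root_.stdGaussian ι = (volume : Measure (ι → ℝ)).withDensity
      (fun ω => ENNReal.ofReal (∏ i, gaussianPDFReal 0 1 (ω i))) := by
  unfold _root_.stdGaussian
  apply Measure.pi_eq
  intro s hs
  have hInt : ∀ i, Integrable ((s i).indicator (gaussianPDFReal 0 1)) :=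
    fun i => (integrable_gaussianPDFReal 0 1).indicator (hs i)
  have hnn : ∀ i x, 0 ≤ (s i).indicator (gaussianPDFReal 0 1) x := fun i x =>
    Set.indicator_nonneg (fun y _ => gaussianPDFReal_nonneg 0 1 y) x
  rw [withDensity_apply _ (MeasurableSet.univ_pi hs),
    ← lintegral_indicator (MeasurableSet.univ_pi hs)]
  have h1 : (Set.univ.pi s).indicator
      (fun ω => ENNReal.ofReal (∏ i, gaussianPDFReal 0 1 (ω i))) =
      fun ω : ι → ℝ => ENNReal.ofReal (∏ i, (s i).indicator (gaussianPDFReal 0 1) (ω i)) := by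
    funext ω
    by_cases h : ω ∈ Set.univ.pi s
    · rw [Set.indicator_of_mem h]
      congr 1
      refine Finset.prod_congr rfl fun i _ => ?_
      rw [Set.indicator_of_mem (h i (Set.mem_univ i))]
    · rw [Set.indicator_of_notMem h]
      have : ∃ i, ω i ∉ s i := by
        by_contra hc; push Not at hc; exact h fun i _ => hc i
      obtain ⟨i, hi⟩ := this
      rw [Finset.prod_eq_zero (Finset.mem_univ i) (Set.indicator_of_notMem hi _)]
      simp
  have hI : Integrable (fun ω : ι → ℝ => ∏ i, (s i).indicator (gaussianPDFReal 0 1) (ω i))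
      volume := Integrable.fintype_prod (fun i => hInt i)
  rw [h1, ← ofReal_integral_eq_lintegral_ofReal hI
    (Filter.Eventually.of_forall fun ω => Finset.prod_nonneg fun i _ => hnn i _),
    integral_fintype_prod_volume_eq_prod (fun i x => (s i).indicator (gaussianPDFReal 0 1) x),
    ENNReal.ofReal_prod_of_nonneg (fun i _ => integral_nonneg (hnn i))]
  refine Finset.prod_congr rfl fun i _ => ?_
  rw [integral_indicator (hs i), gaussianReal_apply_eq_integral 0 one_ne_zero]

lemma gaussian_density_shift {ι : Type*} [Fintype ι] (x ω : ι → ℝ) :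
    ∏ i, gaussianPDFReal 0 1 (ω i + x i) =
      Real.exp (-(∑ i, x i ^ 2) / 2) * Real.exp (-∑ i, ω i * x i) *
        ∏ i, gaussianPDFReal 0 1 (ω i) := by
  rw [neg_div, Finset.sum_div, ← Finset.sum_neg_distrib, ← Finset.sum_neg_distrib,
    Real.exp_sum, Real.exp_sum, ← Finset.prod_mul_distrib, ← Finset.prod_mul_distrib]
  refine Finset.prod_congr rfl fun i _ => ?_
  simp only [gaussianPDFReal, sub_zero, NNReal.coe_one, mul_one]
  rw [mul_left_comm, ← Real.exp_add, ← Real.exp_add]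
  congr 2; ring

/-- Translating a symmetric set by `x` decreases its Gaussian measure by a factor of at most
`exp (-|x|² / 2)`. -/
lemma gaussian_shift {ι : Type*} [Fintype ι] {K : Set (ι → ℝ)} (hK : MeasurableSet K)
    (hsymm : ∀ ω ∈ K, -ω ∈ K) (x : ι → ℝ) :
    Real.exp (-(∑ i, x i ^ 2) / 2) * (_root_.stdGaussian ι).real K ≤
      (_root_.stdGaussian ι).real {ω | ω - x ∈ K} := by
  set p : (ι → ℝ) → ℝ := fun ω => ∏ i, gaussianPDFReal 0 1 (ω i) with hp
  have hpnn : ∀ ω, 0 ≤ p ω := fun ω =>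
    Finset.prod_nonneg fun i _ => gaussianPDFReal_nonneg 0 1 _
  have hpint : Integrable p :=
    Integrable.fintype_prod (fun i => integrable_gaussianPDFReal 0 1)
  have hreal : ∀ S : Set (ι → ℝ), MeasurableSet S →
      (_root_.stdGaussian ι).real S = ∫ ω, S.indicator p ω := by
    intro S hS
    rw [measureReal_def, stdGaussian_eq_withDensity, withDensity_apply _ hS,
      ← ofReal_integral_eq_lintegral_ofReal hpint.integrableOn
        (Filter.Eventually.of_forall hpnn),
      ENNReal.toReal_ofReal (integral_nonneg hpnn), integral_indicator hS]
  have hS : MeasurableSet {ω : ι → ℝ | ω - x ∈ K} := measurableSet_preimage (by fun_prop) hK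
  have hpneg : ∀ ω, p (-ω) = p ω := by
    intro ω; simp [hp, gaussianPDFReal]
  have hKneg : ∀ ω, -ω ∈ K ↔ ω ∈ K := fun ω =>
    ⟨fun h => by simpa using hsymm _ h, hsymm ω⟩
  have e1 : (_root_.stdGaussian ι).real {ω | ω - x ∈ K} =
      ∫ ω, K.indicator (fun ω => p (ω + x)) ω := by
    rw [hreal _ hS, ← integral_add_right_eq_self _ x]
    congr 1; funext ω
    simp [Set.indicator]
  have e2 : (_root_.stdGaussian ι).real {ω | ω - x ∈ K} =
      ∫ ω, K.indicator (fun ω => p (-ω + x)) ω := by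
    rw [e1, ← integral_neg_eq_self]
    congr 1; funext ω
    simp [Set.indicator, hKneg]
  have i1 : Integrable (K.indicator (fun ω => p (ω + x))) :=
    (hpint.comp_add_right x).indicator hK
  have i2 : Integrable (K.indicator (fun ω => p (-ω + x))) :=
    ((hpint.comp_add_right x).comp_neg).indicator hK
  have key : 2 * (Real.exp (-(∑ i, x i ^ 2) / 2) * (_root_.stdGaussian ι).real K) ≤
      2 * (_root_.stdGaussian ι).real {ω | ω - x ∈ K} := by
    rw [two_mul ((_root_.stdGaussian ι).real {ω | ω - x ∈ K})]
    nth_rewrite 1 [e1]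
    rw [e2, ← integral_add i1 i2, hreal K hK, ← mul_assoc, ← integral_const_mul]
    refine integral_mono ((hpint.indicator hK).const_mul _) (i1.add i2) fun ω => ?_
    by_cases h : ω ∈ K
    · simp only [Set.indicator_of_mem h]
      have a1 : p (ω + x) = _ := gaussian_density_shift x ω
      have a2 : p (-ω + x) = _ := gaussian_density_shift x (-ω)
      rw [a1, a2]
      change _ ≤ _ * p ω + _ * p (-ω)
      rw [hpneg]
      simp only [Pi.neg_apply, neg_mul, Finset.sum_neg_distrib, neg_neg]
      set s := ∑ i, ω i * x i
      have hs : 2 ≤ Real.exp (-s) + Real.exp s := by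
        have := Real.add_one_le_exp s
        have := Real.add_one_le_exp (-s)
        linarith
      have hq : 0 ≤ Real.exp (-(∑ i, x i ^ 2) / 2) * p ω :=
        mul_nonneg (Real.exp_pos _).le (hpnn ω)
      nlinarith
    · simp [Set.indicator_of_notMem h]
  linarith

/-! ### Markov and counting inequalities -/

lemma markov_gt {Ω : Type*} [MeasurableSpace Ω] (μ : Measure Ω) [IsProbabilityMeasure μ]
    {f : Ω → ℝ} (hf : ∀ ω, 0 ≤ f ω) (hInt : Integrable f μ) {a c : ℝ} (ha : ∫ ω, f ω ∂μ ≤ a)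
    (hc : 0 < c) : μ.real {ω | c * a < f ω} ≤ 1 / c := by
  have h0 : 0 ≤ ∫ ω, f ω ∂μ := integral_nonneg hf
  rcases (h0.trans ha).eq_or_lt with h | h
  · have hz : f =ᵐ[μ] 0 := (integral_eq_zero_iff_of_nonneg hf hInt).1 (by linarith)
    have : μ.real {ω | c * a < f ω} = 0 := by
      rw [measureReal_def]
      have : μ {ω | c * a < f ω} = 0 := by
        rw [measure_eq_zero_iff_ae_notMem]
        filter_upwards [hz] with ω hω
        simp [hω, ← h]
      simp [this]
    rw [this]; positivity
  · have h1 := mul_meas_ge_le_integral_of_nonneg (Filter.Eventually.of_forall hf) hInt (c * a)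
    have h2 : μ.real {ω | c * a < f ω} ≤ μ.real {ω | c * a ≤ f ω} :=
      measureReal_mono fun ω (hω : c * a < f ω) => hω.le
    rw [le_div_iff₀ hc]
    have h3 : c * a * μ.real {ω | c * a < f ω} ≤ a :=
      (mul_le_mul_of_nonneg_left h2 (by positivity)).trans (h1.trans ha)
    have : a * (μ.real {ω | c * a < f ω} * c) ≤ a * 1 := by linarith
    exact le_of_mul_le_mul_left this h

/-- If every point lies in at most `B` of the sets `E a`, their measures add up to at most `B`. -/
lemma sum_measure_le {Ω κ : Type*} [MeasurableSpace Ω] (μ : Measure Ω) [IsProbabilityMeasure μ]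
    (S : Finset κ) (E : κ → Set Ω) (hE : ∀ a ∈ S, MeasurableSet (E a)) (B : ℝ)
    (hB : ∀ ω, ((S.filter fun a => ω ∈ E a).card : ℝ) ≤ B) :
    ∑ a ∈ S, μ.real (E a) ≤ B := by
  have h1 : ∑ a ∈ S, μ.real (E a) = ∫ ω, ∑ a ∈ S, (E a).indicator (fun _ => (1 : ℝ)) ω ∂μ := by
    rw [integral_finsetSum]
    · refine Finset.sum_congr rfl fun a ha => ?_
      rw [integral_indicator_const _ (hE a ha)]; simp
    · intro a ha
      exact (integrable_const 1).indicator (hE a ha)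
  rw [h1]
  calc _ ≤ ∫ _ω, B ∂μ := by
        refine integral_mono (integrable_finsetSum _ fun a ha =>
          (integrable_const 1).indicator (hE a ha)) (integrable_const B) fun ω => ?_
        refine le_trans (le_of_eq ?_) (hB ω)
        simp [Set.indicator]
    _ = B := by simp

/-- A set of finite packing numbers has a maximal packing, whose balls cover it. -/
lemma exists_net {β : Type*} (U : Set β) (ρ : β → β → ℝ) (r B : ℝ)
    (hsymm : ∀ x y, ρ x y = ρ y x) (hself : ∀ x, ρ x x ≤ r)
    (hB : ∀ S : Finset β, (↑S ⊆ U) → (∀ x ∈ S, ∀ y ∈ S, x ≠ y → r < ρ x y) → (S.card : ℝ) ≤ B) :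
    ∃ c : Finset β, ↑c ⊆ U ∧ (∀ x ∈ c, ∀ y ∈ c, x ≠ y → r < ρ x y) ∧
      (c.card : ℝ) ≤ B ∧ ∀ y ∈ U, ∃ x ∈ c, ρ x y ≤ r := by
  let P : ℕ → Prop := fun k => ∃ S : Finset β, S.card = k ∧ ↑S ⊆ U ∧
    ∀ x ∈ S, ∀ y ∈ S, x ≠ y → r < ρ x y
  have hP0 : P 0 := ⟨∅, by simp, by simp, by simp⟩
  have hle : ∀ k, P k → k ≤ ⌊B⌋₊ := by
    rintro k ⟨S, rfl, h1, h2⟩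
    exact Nat.le_floor (hB S h1 h2)
  have hmax := Nat.findGreatest_spec (P := P) (Nat.zero_le ⌊B⌋₊) hP0
  obtain ⟨S, hcard, hSU, hsep⟩ := hmax
  refine ⟨S, hSU, hsep, hB S hSU hsep, fun y hy => ?_⟩
  by_contra hcon
  push Not at hcon
  have hyS : y ∉ S := fun h => absurd (hself y) (not_le.2 (hcon y h))
  have hP : P (S.card + 1) := by
    refine ⟨insert y S, Finset.card_insert_of_notMem hyS, ?_, ?_⟩
    · intro a ha
      rcases Finset.mem_insert.1 (Finset.mem_coe.1 ha) with rfl | h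
      · exact hy
      · exact hSU h
    · intro a ha b hb hab
      rcases Finset.mem_insert.1 ha with rfl | h <;> rcases Finset.mem_insert.1 hb with rfl | h'
      · exact absurd rfl hab
      · rw [hsymm]; exact hcon b h'
      · exact hcon a h
      · exact hsep a h b h' hab
  have := Nat.le_findGreatest (hle _ hP) hP
  omega

/-! ### Sudakov minoration -/

/-- The Euclidean norm on `ι → ℝ`. -/
noncomputable def nrm {ι : Type*} [Fintype ι] (v : ι → ℝ) : ℝ := Real.sqrt (∑ i, v i ^ 2)

section nrm
variable {ι : Type*} [Fintype ι]

lemma nrm_eq_norm (v : ι → ℝ) : nrm v = ‖WithLp.toLp 2 v‖ := by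
  simp [nrm, EuclideanSpace.norm_eq]

lemma nrm_nonneg (v : ι → ℝ) : 0 ≤ nrm v := Real.sqrt_nonneg _

lemma nrm_sq (v : ι → ℝ) : nrm v ^ 2 = ∑ i, v i ^ 2 :=
  Real.sq_sqrt (Finset.sum_nonneg fun _ _ => sq_nonneg _)

lemma nrm_add_le (v w : ι → ℝ) : nrm (v + w) ≤ nrm v + nrm w := by
  simp only [nrm_eq_norm, WithLp.toLp_add]; exact norm_add_le _ _

lemma nrm_smul (c : ℝ) (v : ι → ℝ) : nrm (c • v) = |c| * nrm v := by
  simp only [nrm_eq_norm, WithLp.toLp_smul, norm_smul, Real.norm_eq_abs]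

lemma nrm_neg (v : ι → ℝ) : nrm (-v) = nrm v := by
  simp [nrm]

lemma nrm_zero : nrm (0 : ι → ℝ) = 0 := by simp [nrm]

lemma nrm_sub_comm (v w : ι → ℝ) : nrm (v - w) = nrm (w - v) := by
  rw [← nrm_neg, neg_sub]

lemma nrm_sum_le {κ : Type*} (s : Finset κ) (f : κ → ι → ℝ) :
    nrm (∑ a ∈ s, f a) ≤ ∑ a ∈ s, nrm (f a) := by
  induction s using Finset.induction_on with
  | empty => simp [nrm_zero]
  | insert a s ha ih =>
    rw [Finset.sum_insert ha, Finset.sum_insert ha]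
    exact (nrm_add_le _ _).trans (by linarith)

lemma nrm_le_sum_abs (v : ι → ℝ) : nrm v ≤ ∑ i, |v i| := by
  rw [nrm]
  apply Real.sqrt_le_iff.2
  refine ⟨Finset.sum_nonneg fun i _ => abs_nonneg _, ?_⟩
  have := Finset.sum_sq_le_sq_sum_of_nonneg (s := Finset.univ) (f := fun i => |v i|)
    (fun i _ => abs_nonneg _)
  simpa using this

end nrm

/-- The properties of a symmetric support function `h` with Gaussian mean at most `ℓ`: the function
`g ↦ sup_{t ∈ T} ⟨v t, g⟩` satisfies them when `T` is symmetric and `v` is linear. -/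
structure SuppFn {ι τ : Type*} [Fintype ι] (v : τ → ι → ℝ) (T : Set τ) (h : (ι → ℝ) → ℝ)
    (ℓ : ℝ) : Prop where
  even : ∀ g, h (-g) = h g
  sub : ∀ g g', h (g + g') ≤ h g + h g'
  meas : Measurable h
  int : Integrable h (_root_.stdGaussian ι)
  mean : ∫ g, h g ∂(_root_.stdGaussian ι) ≤ ℓ
  le : ∀ t ∈ T, ∀ g, ∑ i, v t i * g i ≤ h g

namespace SuppFn
variable {ι τ : Type*} [Fintype ι] {v : τ → ι → ℝ} {T : Set τ} {h : (ι → ℝ) → ℝ} {ℓ : ℝ}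

lemma nonneg (H : SuppFn v T h ℓ) (g : ι → ℝ) : 0 ≤ h g := by
  have h0 := H.sub 0 0
  have h1 := H.sub g (-g)
  rw [H.even, add_neg_cancel] at h1
  rw [add_zero] at h0
  linarith

lemma mean_nonneg (H : SuppFn v T h ℓ) : 0 ≤ ℓ := (integral_nonneg H.nonneg).trans H.mean

/-- A volume bound: the sets `p a + {h ≤ 4ℓ}` are pairwise disjoint, and each has Gaussian measure at
least `3/4 * exp (-|p a|² / 2)`. -/
lemma packing (H : SuppFn v T h ℓ) {κ : Type*} (M : Finset κ) (p : κ → ι → ℝ)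
    (hsep : ∀ a ∈ M, ∀ b ∈ M, a ≠ b → 8 * ℓ < h (p a - p b)) :
    ∑ a ∈ M, Real.exp (-(∑ i, p a i ^ 2) / 2) ≤ 4 / 3 := by
  set K : Set (ι → ℝ) := {ω | h ω ≤ 4 * ℓ} with hK
  have hKm : MeasurableSet K := measurableSet_le H.meas measurable_const
  have hKs : ∀ ω ∈ K, -ω ∈ K := by
    intro ω hω
    change h (-ω) ≤ _
    rw [H.even]; exact hω
  have hKμ : 3 / 4 ≤ (_root_.stdGaussian ι).real K := by
    have h1 := markov_gt (_root_.stdGaussian ι) H.nonneg H.int H.mean (c := 4) (by norm_num)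
    have h2 : {ω | 4 * ℓ < h ω} = Kᶜ := by
      ext ω; simp [hK]
    rw [h2, probReal_compl_eq_one_sub hKm] at h1
    linarith
  have h3 := sum_measure_le (_root_.stdGaussian ι) M (fun a => {ω | ω - p a ∈ K})
    (fun a _ => measurableSet_preimage (by fun_prop) hKm) 1 (by
      intro ω
      have : (M.filter fun a => ω ∈ {ω | ω - p a ∈ K}).card ≤ 1 := by
        rw [Finset.card_le_one]
        intro a ha b hb
        rw [Finset.mem_filter] at ha hb
        by_contra hab
        have h4 := hsep a ha.1 b hb.1 hab
        have h5 : h (ω - p a) ≤ 4 * ℓ := ha.2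
        have h6 : h (ω - p b) ≤ 4 * ℓ := hb.2
        have h7 := H.sub (ω - p b) (-(ω - p a))
        rw [H.even] at h7
        have h8 : ω - p b + -(ω - p a) = p a - p b := by abel
        rw [h8] at h7
        linarith
      exact_mod_cast this)
  have h4 : ∑ a ∈ M, Real.exp (-(∑ i, p a i ^ 2) / 2) * (3 / 4) ≤ 1 := by
    refine le_trans (Finset.sum_le_sum fun a _ => ?_) h3
    exact (mul_le_mul_of_nonneg_left hKμ (Real.exp_pos _).le).trans (gaussian_shift hKm hKs (p a))
  rw [← Finset.sum_mul] at h4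
  linarith

/-- The Gaussian mean of the support function controls the Euclidean radius: two disjoint translates
of `{h ≤ 4ℓ}`, one by a unit vector, cannot both fit into a probability space. -/
lemma nrm_le (H : SuppFn v T h ℓ) {t : τ} (ht : t ∈ T) : nrm (v t) ≤ 8 * ℓ := by
  by_contra hcon
  push Not at hcon
  have hℓ := H.mean_nonneg
  have hpos : 0 < nrm (v t) := by linarith
  set u : ι → ℝ := (nrm (v t))⁻¹ • v t with hu
  have hu1 : ∑ i, u i ^ 2 = 1 := by
    rw [← nrm_sq, hu, nrm_smul, abs_of_pos (inv_pos.2 hpos), inv_mul_cancel₀ hpos.ne', one_pow]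
  have hhu : nrm (v t) ≤ h u := by
    refine le_trans (le_of_eq ?_) (H.le t ht u)
    simp only [hu, Pi.smul_apply, smul_eq_mul]
    have : ∀ i, v t i * ((nrm (v t))⁻¹ * v t i) = (nrm (v t))⁻¹ * v t i ^ 2 := fun i => by ring
    simp only [this]
    rw [← Finset.mul_sum, ← nrm_sq]
    field_simp
  have := H.packing (Finset.univ : Finset Bool) (fun b => if b then u else 0) (by
    intro a _ b _ hab
    cases a <;> cases b <;> simp_all
    · rw [H.even]; linarith
    · linarith)
  simp [hu1] at this
  have := Real.add_one_le_exp (-(1:ℝ) / 2)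
  linarith

lemma nrm_sub_le (H : SuppFn v T h ℓ) {t t' : τ} (ht : t ∈ T) (ht' : t' ∈ T) :
    nrm (v t - v t') ≤ 16 * ℓ := by
  have := nrm_add_le (v t) (-v t')
  rw [nrm_neg, ← sub_eq_add_neg] at this
  linarith [H.nrm_le ht, H.nrm_le ht']

/-- Local form of the Sudakov bound: packings inside a ball of comparable radius. -/
lemma local_bound (H : SuppFn v T h ℓ) {r : ℝ} (hr : 0 < r) (x : ι → ℝ) (M : Finset τ)
    (hMT : ↑M ⊆ T) (hx : ∀ t ∈ M, nrm (v t - x) ≤ 2 * r)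
    (hsep : ∀ a ∈ M, ∀ b ∈ M, a ≠ b → r < nrm (v a - v b)) :
    (M.card : ℝ) ≤ Real.exp (768 * (ℓ / r) ^ 2) := by
  by_cases hc : M.card ≤ 1
  · calc (M.card : ℝ) ≤ 1 := by exact_mod_cast hc
      _ ≤ _ := Real.one_le_exp (by positivity)
  push Not at hc
  obtain ⟨a, ha, b, hb, hab⟩ := Finset.one_lt_card.1 hc
  have h1 : r < 16 * ℓ := (hsep a ha b hb hab).trans_le (H.nrm_sub_le (hMT ha) (hMT hb))
  have hℓ : 0 < ℓ := by linarith
  set s : ℝ := 16 * ℓ / r ^ 2 with hs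
  have hspos : 0 < s := by positivity
  have hpack := H.packing M (fun t => s • (v t - x)) (by
    intro a ha b hb hab
    have h2 := hsep a ha b hb hab
    have e : s • (v a - x) - s • (v b - x) = s • (v a - v b) := by
      rw [← smul_sub]; congr 1; abel
    rw [e]
    have h3 := H.le a (hMT ha) (s • (v a - v b))
    have h4 := H.le b (hMT hb) (-(s • (v a - v b)))
    rw [H.even] at h4
    have h5 : ∑ i, v a i * (s • (v a - v b)) i + ∑ i, v b i * (-(s • (v a - v b))) i
        = s * nrm (v a - v b) ^ 2 := by
      rw [nrm_sq, Finset.mul_sum, ← Finset.sum_add_distrib]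
      refine Finset.sum_congr rfl fun i _ => ?_
      simp only [Pi.smul_apply, Pi.neg_apply, Pi.sub_apply, smul_eq_mul]
      ring
    have h6 : r ^ 2 < nrm (v a - v b) ^ 2 := by
      exact pow_lt_pow_left₀ h2 hr.le (by norm_num)
    have h7 : s * r ^ 2 = 16 * ℓ := by rw [hs]; field_simp
    have h8 : s * r ^ 2 < s * nrm (v a - v b) ^ 2 := mul_lt_mul_of_pos_left h6 hspos
    linarith)
  have hterm : ∀ t ∈ M, Real.exp (-(512 * (ℓ / r) ^ 2)) ≤
      Real.exp (-(∑ i, (s • (v t - x)) i ^ 2) / 2) := by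
    intro t ht
    apply Real.exp_le_exp.2
    rw [← nrm_sq, nrm_smul, abs_of_pos hspos]
    have h9 : s * nrm (v t - x) ≤ 32 * (ℓ / r) := by
      calc s * nrm (v t - x) ≤ s * (2 * r) := mul_le_mul_of_nonneg_left (hx t ht) hspos.le
        _ = 32 * (ℓ / r) := by rw [hs]; field_simp; norm_num
    have h10 : (s * nrm (v t - x)) ^ 2 ≤ (32 * (ℓ / r)) ^ 2 :=
      pow_le_pow_left₀ (mul_nonneg hspos.le (nrm_nonneg _)) h9 2
    linarith
  have hsum := (Finset.sum_le_sum hterm).trans hpack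
  rw [Finset.sum_const, nsmul_eq_mul] at hsum
  have h11 : (M.card : ℝ) ≤ 2 * Real.exp (512 * (ℓ / r) ^ 2) := by
    rw [Real.exp_neg, ← div_eq_mul_inv, div_le_iff₀ (Real.exp_pos _)] at hsum
    have := Real.exp_pos (512 * (ℓ / r) ^ 2)
    linarith
  have h12 : (2 : ℝ) ≤ Real.exp (256 * (ℓ / r) ^ 2) := by
    have : 1 ≤ 16 * (ℓ / r) := by
      rw [← mul_div_assoc, le_div_iff₀ hr]; linarith
    have : 1 ≤ 256 * (ℓ / r) ^ 2 := by nlinarith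
    have := Real.add_one_le_exp (256 * (ℓ / r) ^ 2)
    linarith
  calc (M.card : ℝ) ≤ 2 * Real.exp (512 * (ℓ / r) ^ 2) := h11
    _ ≤ Real.exp (256 * (ℓ / r) ^ 2) * Real.exp (512 * (ℓ / r) ^ 2) :=
        mul_le_mul_of_nonneg_right h12 (Real.exp_pos _).le
    _ = _ := by rw [← Real.exp_add]; congr 1; ring

/-- Sudakov's minoration, by induction on the number `j` of dyadic scales between `r` and the
diameter. Each halving of `r` costs one factor from `local_bound`; the exponents form a geometric
series, `1024 / 4 + 768 = 1024`. -/
lemma sudakov_aux (H : SuppFn v T h ℓ) (j : ℕ) : ∀ r : ℝ, 0 < r → 16 * ℓ < 2 ^ j * r →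
    ∀ M : Finset τ, ↑M ⊆ T → (∀ a ∈ M, ∀ b ∈ M, a ≠ b → r < nrm (v a - v b)) →
    (M.card : ℝ) ≤ Real.exp (1024 * (ℓ / r) ^ 2) := by
  induction j with
  | zero =>
    intro r hr hrl M hMT hsep
    have : M.card ≤ 1 := by
      rw [Finset.card_le_one]
      intro a ha b hb
      by_contra hab
      have h1 := hsep a ha b hb hab
      have h2 := H.nrm_sub_le (hMT ha) (hMT hb)
      simp at hrl
      linarith
    calc (M.card : ℝ) ≤ 1 := by exact_mod_cast this
      _ ≤ _ := Real.one_le_exp (by positivity)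
  | succ j ih =>
    intro r hr hrl M hMT hsep
    have ih' := ih (2 * r) (by positivity) (by rw [pow_succ] at hrl; linarith)
    obtain ⟨c, hcM, -, hcard, hcov⟩ := exists_net (↑M : Set τ) (fun a b => nrm (v a - v b)) (2 * r)
      (Real.exp (1024 * (ℓ / (2 * r)) ^ 2)) (fun x y => nrm_sub_comm _ _)
      (fun x => by simp only [sub_self, nrm_zero]; positivity)
      (fun S hS hSsep => ih' S (hS.trans hMT) hSsep)
    have hsub : M ⊆ c.biUnion fun x => M.filter fun t => nrm (v t - v x) ≤ 2 * r := by
      intro t ht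
      obtain ⟨x, hx, hxt⟩ := hcov t ht
      rw [Finset.mem_biUnion]
      exact ⟨x, hx, Finset.mem_filter.2 ⟨ht, by rw [nrm_sub_comm]; exact hxt⟩⟩
    have hloc : ∀ x ∈ c, (((M.filter fun t => nrm (v t - v x) ≤ 2 * r).card : ℕ) : ℝ) ≤
        Real.exp (768 * (ℓ / r) ^ 2) := by
      intro x _
      refine H.local_bound hr (v x) _ (fun t ht => hMT (Finset.mem_filter.1 ht).1)
        (fun t ht => (Finset.mem_filter.1 ht).2) fun a ha b hb hab => ?_
      exact hsep a (Finset.mem_filter.1 ha).1 b (Finset.mem_filter.1 hb).1 hab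
    calc (M.card : ℝ) ≤ ∑ x ∈ c, ((M.filter fun t => nrm (v t - v x) ≤ 2 * r).card : ℝ) := by
          exact_mod_cast (Finset.card_le_card hsub).trans Finset.card_biUnion_le
      _ ≤ ∑ _x ∈ c, Real.exp (768 * (ℓ / r) ^ 2) := Finset.sum_le_sum hloc
      _ = c.card * Real.exp (768 * (ℓ / r) ^ 2) := by rw [Finset.sum_const, nsmul_eq_mul]
      _ ≤ Real.exp (1024 * (ℓ / (2 * r)) ^ 2) * Real.exp (768 * (ℓ / r) ^ 2) :=
          mul_le_mul_of_nonneg_right hcard (Real.exp_pos _).le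
      _ = _ := by
          rw [← Real.exp_add]; congr 1
          field_simp; ring

/-- Sudakov's minoration in a form that includes `r = 0`, where `ℓ` and all distances vanish. -/
lemma sudakov (H : SuppFn v T h ℓ) {r q : ℝ} (hr : 0 ≤ r) (hℓr : ℓ ≤ q * r)
    (M : Finset τ) (hMT : ↑M ⊆ T) (hsep : ∀ a ∈ M, ∀ b ∈ M, a ≠ b → r < nrm (v a - v b)) :
    (M.card : ℝ) ≤ Real.exp (1024 * q ^ 2) := by
  rcases hr.eq_or_lt with h0 | h0
  · have : M.card ≤ 1 := by
      rw [Finset.card_le_one]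
      intro a ha b hb
      by_contra hab
      have h1 := hsep a ha b hb hab
      have h2 := H.nrm_sub_le (hMT ha) (hMT hb)
      rw [← h0] at h1 hℓr
      linarith
    calc (M.card : ℝ) ≤ 1 := by exact_mod_cast this
      _ ≤ _ := Real.one_le_exp (by positivity)
  · obtain ⟨j, hj⟩ := pow_unbounded_of_one_lt (16 * ℓ / r) (one_lt_two)
    rw [div_lt_iff₀ h0] at hj
    refine (H.sudakov_aux j r h0 hj M hMT hsep).trans (Real.exp_le_exp.2 ?_)
    have h1 : ℓ / r ≤ q := by rw [div_le_iff₀ h0]; exact hℓr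
    have h2 : 0 ≤ ℓ / r := div_nonneg H.mean_nonneg hr
    have := pow_le_pow_left₀ h2 h1 2
    linarith

end SuppFn

/-! ### The support function of `T` -/

/-- The support function `u ↦ sup_{t ∈ T} ⟨u, t⟩` of `T`. -/
noncomputable def supT {m : ℕ} (T : Set (Fin m → ℝ)) (u : Fin m → ℝ) : ℝ :=
  sSup { s : ℝ | ∃ t ∈ T, s = ∑ j, u j * t j }

/-- `T` is nonempty and symmetric, with coordinates bounded by `M`. -/
structure GoodT {m : ℕ} (T : Set (Fin m → ℝ)) (M : ℝ) : Prop where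
  ne : T.Nonempty
  nn : 0 ≤ M
  bd : ∀ t ∈ T, ∀ j, |t j| ≤ M
  symm : ∀ t ∈ T, -t ∈ T

namespace GoodT
variable {m : ℕ} {T : Set (Fin m → ℝ)} {M : ℝ}

lemma le_bound (hT : GoodT T M) {t : Fin m → ℝ} (ht : t ∈ T) (u : Fin m → ℝ) :
    ∑ j, u j * t j ≤ M * ∑ j, |u j| := by
  rw [Finset.mul_sum]
  refine Finset.sum_le_sum fun j _ => ?_
  calc u j * t j ≤ |u j * t j| := le_abs_self _
    _ = |t j| * |u j| := by rw [abs_mul, mul_comm]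
    _ ≤ M * |u j| := mul_le_mul_of_nonneg_right (hT.bd t ht j) (abs_nonneg _)

lemma le_supT (hT : GoodT T M) {t : Fin m → ℝ} (ht : t ∈ T) (u : Fin m → ℝ) :
    ∑ j, u j * t j ≤ supT T u := by
  refine le_csSup ⟨M * ∑ j, |u j|, ?_⟩ ⟨t, ht, rfl⟩
  rintro s ⟨t', ht', rfl⟩
  exact hT.le_bound ht' u

lemma supT_le (hT : GoodT T M) {u : Fin m → ℝ} {a : ℝ} (h : ∀ t ∈ T, ∑ j, u j * t j ≤ a) :
    supT T u ≤ a := by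
  obtain ⟨t, ht⟩ := hT.ne
  refine csSup_le ⟨_, t, ht, rfl⟩ ?_
  rintro s ⟨t', ht', rfl⟩
  exact h t' ht'

lemma supT_bound (hT : GoodT T M) (u : Fin m → ℝ) : supT T u ≤ M * ∑ j, |u j| :=
  hT.supT_le fun _ ht => hT.le_bound ht u

lemma supT_neg (hT : GoodT T M) (u : Fin m → ℝ) : supT T (-u) = supT T u := by
  have key : ∀ w : Fin m → ℝ, supT T (-w) ≤ supT T w := by
    intro w
    refine hT.supT_le fun t ht => ?_
    have := hT.le_supT (hT.symm t ht) w
    simpa using this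
  refine le_antisymm (key u) ?_
  simpa using key (-u)

lemma supT_add (hT : GoodT T M) (u w : Fin m → ℝ) : supT T (u + w) ≤ supT T u + supT T w := by
  refine hT.supT_le fun t ht => ?_
  have h1 := hT.le_supT ht u
  have h2 := hT.le_supT ht w
  simp only [Pi.add_apply, add_mul, Finset.sum_add_distrib]
  linarith

lemma supT_smul (hT : GoodT T M) {c : ℝ} (hc : 0 ≤ c) (u : Fin m → ℝ) :
    supT T (c • u) ≤ c * supT T u := by
  refine hT.supT_le fun t ht => ?_
  have h1 := mul_le_mul_of_nonneg_left (hT.le_supT ht u) hc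
  refine le_trans (le_of_eq ?_) h1
  rw [Finset.mul_sum]
  exact Finset.sum_congr rfl fun j _ => by simp [mul_assoc]

lemma supT_nonneg (hT : GoodT T M) (u : Fin m → ℝ) : 0 ≤ supT T u := by
  obtain ⟨t, ht⟩ := hT.ne
  have h1 := hT.le_supT ht u
  have h2 := hT.le_supT (hT.symm t ht) u
  simp at h2
  linarith

lemma supT_zero (hT : GoodT T M) : supT T 0 = 0 :=
  le_antisymm (hT.supT_le fun t _ => by simp) (hT.supT_nonneg 0)

lemma supT_sum (hT : GoodT T M) {κ : Type*} (s : Finset κ) (c : κ → ℝ) (hc : ∀ a, 0 ≤ c a)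
    (u : κ → Fin m → ℝ) : supT T (∑ a ∈ s, c a • u a) ≤ ∑ a ∈ s, c a * supT T (u a) := by
  induction s using Finset.induction_on with
  | empty => simp [hT.supT_zero]
  | insert a s ha ih =>
    rw [Finset.sum_insert ha, Finset.sum_insert ha]
    exact (hT.supT_add _ _).trans (add_le_add (hT.supT_smul (hc a) _) ih)

lemma continuous_supT (hT : GoodT T M) : Continuous (supT T) := by
  have hL : LipschitzWith (M * m).toNNReal (supT T) := by
    refine LipschitzWith.of_le_add_mul _ fun u w => ?_
    have h1 := hT.supT_add w (u - w)
    rw [add_sub_cancel] at h1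
    have h2 := hT.supT_bound (u - w)
    have h3 : ∑ j, |(u - w) j| ≤ m * dist u w := by
      calc ∑ j, |(u - w) j| ≤ ∑ _j : Fin m, dist u w :=
            Finset.sum_le_sum fun j _ => by
              rw [Pi.sub_apply, ← Real.dist_eq]; exact dist_le_pi_dist u w j
        _ = m * dist u w := by simp
    rw [Real.coe_toNNReal _ (mul_nonneg hT.nn (Nat.cast_nonneg m)), mul_assoc]
    have := mul_le_mul_of_nonneg_left h3 hT.nn
    linarith
  exact hL.continuous

end GoodT

/-! ### The norms `α_A`, `β_A` and elementary tensors -/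

section norms
variable {n m d : ℕ}

/-- The vector of `ℝ^n` whose Euclidean norm is `α_A (θ ⊗ t)`. -/
def alv (A : (Fin (d + 1) → Fin n) → Fin m → ℝ) (θ : (PIdx d → Fin n) → ℝ) (t : Fin m → ℝ) :
    Fin n → ℝ :=
  fun i1 => ∑ i', ∑ j, A (ext0 i1 i') j * θ i' * t j

/-- The contraction of `A` against `g` and `θ`. -/
def ucoef (A : (Fin (d + 1) → Fin n) → Fin m → ℝ) (θ : (PIdx d → Fin n) → ℝ) (g : Fin n → ℝ) :
    Fin m → ℝ :=
  fun j => ∑ i1, ∑ i', A (ext0 i1 i') j * g i1 * θ i'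

/-- The norm `β_A`. -/
noncomputable def betaN (A : (Fin (d + 1) → Fin n) → Fin m → ℝ) (T : Set (Fin m → ℝ))
    (θ : (PIdx d → Fin n) → ℝ) : ℝ :=
  ∫ g, supT T (ucoef A θ g) ∂(_root_.stdGaussian (Fin n))

/-- The elementary tensor `⊗ y^k`. -/
def ten (y : PIdx d → Fin n → ℝ) : (PIdx d → Fin n) → ℝ := fun i' => ∏ k, y k (i' k)

/-- The vectors with `ω^k` in the slots `k ∈ I` and `x^k` in the others. -/
def mix (I : Finset (PIdx d)) (ω : PIdx d × Fin n → ℝ) (x : PIdx d → Fin n → ℝ) :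
    PIdx d → Fin n → ℝ :=
  fun k i => if k ∈ I then ω (k, i) else x k i

lemma alv_add_left (A : (Fin (d + 1) → Fin n) → Fin m → ℝ) (θ θ' : (PIdx d → Fin n) → ℝ)
    (t : Fin m → ℝ) : alv A (θ + θ') t = alv A θ t + alv A θ' t := by
  funext i1
  simp only [alv, Pi.add_apply, mul_add, add_mul, Finset.sum_add_distrib]

lemma alv_smul_left (A : (Fin (d + 1) → Fin n) → Fin m → ℝ) (c : ℝ) (θ : (PIdx d → Fin n) → ℝ)
    (t : Fin m → ℝ) : alv A (c • θ) t = c • alv A θ t := by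
  funext i1
  simp only [alv, Pi.smul_apply, smul_eq_mul, Finset.mul_sum]
  exact Finset.sum_congr rfl fun _ _ => Finset.sum_congr rfl fun _ _ => by ring

lemma alv_sum_left (A : (Fin (d + 1) → Fin n) → Fin m → ℝ) {κ : Type*} (s : Finset κ) (c : κ → ℝ)
    (θ : κ → (PIdx d → Fin n) → ℝ) (t : Fin m → ℝ) :
    alv A (∑ a ∈ s, c a • θ a) t = ∑ a ∈ s, c a • alv A (θ a) t := by
  induction s using Finset.induction_on with
  | empty => funext i; simp [alv]
  | insert a s ha ih =>
    rw [Finset.sum_insert ha, Finset.sum_insert ha, alv_add_left, alv_smul_left, ih]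

lemma ucoef_add_left (A : (Fin (d + 1) → Fin n) → Fin m → ℝ) (θ θ' : (PIdx d → Fin n) → ℝ)
    (g : Fin n → ℝ) : ucoef A (θ + θ') g = ucoef A θ g + ucoef A θ' g := by
  funext i1
  simp only [ucoef, Pi.add_apply, mul_add, Finset.sum_add_distrib]

lemma ucoef_smul_left (A : (Fin (d + 1) → Fin n) → Fin m → ℝ) (c : ℝ)
    (θ : (PIdx d → Fin n) → ℝ) (g : Fin n → ℝ) : ucoef A (c • θ) g = c • ucoef A θ g := by
  funext i1
  simp only [ucoef, Pi.smul_apply, smul_eq_mul, Finset.mul_sum]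
  exact Finset.sum_congr rfl fun _ _ => Finset.sum_congr rfl fun _ _ => by ring

lemma ucoef_sum_left (A : (Fin (d + 1) → Fin n) → Fin m → ℝ) {κ : Type*} (s : Finset κ)
    (c : κ → ℝ) (θ : κ → (PIdx d → Fin n) → ℝ) (g : Fin n → ℝ) :
    ucoef A (∑ a ∈ s, c a • θ a) g = ∑ a ∈ s, c a • ucoef A (θ a) g := by
  induction s using Finset.induction_on with
  | empty => funext i; simp [ucoef]
  | insert a s ha ih =>
    rw [Finset.sum_insert ha, Finset.sum_insert ha, ucoef_add_left, ucoef_smul_left, ih]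

lemma ucoef_add_right (A : (Fin (d + 1) → Fin n) → Fin m → ℝ) (θ : (PIdx d → Fin n) → ℝ)
    (g g' : Fin n → ℝ) : ucoef A θ (g + g') = ucoef A θ g + ucoef A θ g' := by
  funext i1
  simp only [ucoef, Pi.add_apply, mul_add, add_mul, Finset.sum_add_distrib]

lemma ucoef_neg_right (A : (Fin (d + 1) → Fin n) → Fin m → ℝ) (θ : (PIdx d → Fin n) → ℝ)
    (g : Fin n → ℝ) : ucoef A θ (-g) = -ucoef A θ g := by
  funext i1
  simp [ucoef]

lemma sum_ucoef_mul (A : (Fin (d + 1) → Fin n) → Fin m → ℝ) (θ : (PIdx d → Fin n) → ℝ)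
    (g : Fin n → ℝ) (t : Fin m → ℝ) :
    ∑ j, ucoef A θ g j * t j = ∑ i1, alv A θ t i1 * g i1 := by
  simp only [ucoef, alv, Finset.sum_mul]
  rw [Finset.sum_comm]
  refine Finset.sum_congr rfl fun i1 _ => ?_
  rw [Finset.sum_comm]
  exact Finset.sum_congr rfl fun _ _ => Finset.sum_congr rfl fun _ _ => by ring

/-- The sum of the absolute values of the entries of `A`. -/
def absA (A : (Fin (d + 1) → Fin n) → Fin m → ℝ) : ℝ := ∑ i1, ∑ i', ∑ j, |A (ext0 i1 i') j|

lemma absA_nonneg (A : (Fin (d + 1) → Fin n) → Fin m → ℝ) : 0 ≤ absA A :=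
  Finset.sum_nonneg fun _ _ => Finset.sum_nonneg fun _ _ => Finset.sum_nonneg fun _ _ =>
    abs_nonneg _

lemma nrm_alv_le (A : (Fin (d + 1) → Fin n) → Fin m → ℝ) {θ : (PIdx d → Fin n) → ℝ}
    {t : Fin m → ℝ} {M G : ℝ} (hG : ∀ i', |θ i'| ≤ G) (ht : ∀ j, |t j| ≤ M) :
    nrm (alv A θ t) ≤ absA A * M * G := by
  refine (nrm_le_sum_abs _).trans ?_
  simp only [absA, Finset.sum_mul]
  refine Finset.sum_le_sum fun i1 _ => ?_
  refine (Finset.abs_sum_le_sum_abs _ _).trans (Finset.sum_le_sum fun i' _ => ?_)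
  refine (Finset.abs_sum_le_sum_abs _ _).trans (Finset.sum_le_sum fun j _ => ?_)
  rw [abs_mul, abs_mul]
  calc |A (ext0 i1 i') j| * |θ i'| * |t j| = |A (ext0 i1 i') j| * (|t j| * |θ i'|) := by ring
    _ ≤ |A (ext0 i1 i') j| * (M * G) :=
        mul_le_mul_of_nonneg_left (mul_le_mul (ht j) (hG i') (abs_nonneg _)
          ((abs_nonneg _).trans (ht j))) (abs_nonneg _)
    _ = _ := by ring

lemma sum_abs_ucoef_le (A : (Fin (d + 1) → Fin n) → Fin m → ℝ) {θ : (PIdx d → Fin n) → ℝ}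
    {G : ℝ} (hG : ∀ i', |θ i'| ≤ G) (hG0 : 0 ≤ G) (g : Fin n → ℝ) :
    ∑ j, |ucoef A θ g j| ≤ absA A * G * ∑ i1, |g i1| := by
  calc ∑ j, |ucoef A θ g j|
      ≤ ∑ j, ∑ i1, ∑ i', |A (ext0 i1 i') j| * (G * ∑ i, |g i|) := by
        refine Finset.sum_le_sum fun j _ => ?_
        refine (Finset.abs_sum_le_sum_abs _ _).trans (Finset.sum_le_sum fun i1 _ => ?_)
        refine (Finset.abs_sum_le_sum_abs _ _).trans (Finset.sum_le_sum fun i' _ => ?_)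
        rw [abs_mul, abs_mul, mul_assoc, mul_comm |g i1|]
        refine mul_le_mul_of_nonneg_left (mul_le_mul (hG i') ?_ (abs_nonneg _) hG0) (abs_nonneg _)
        exact Finset.single_le_sum (f := fun i => |g i|) (fun i _ => abs_nonneg _)
          (Finset.mem_univ i1)
    _ = absA A * G * ∑ i1, |g i1| := by
        rw [Finset.sum_comm, absA, mul_assoc, Finset.sum_mul]
        refine Finset.sum_congr rfl fun i1 _ => ?_
        rw [Finset.sum_comm, Finset.sum_mul]
        refine Finset.sum_congr rfl fun i' _ => ?_
        rw [Finset.sum_mul]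

lemma integrable_gaussian_abs : Integrable (fun x : ℝ => |x|) (gaussianReal 0 1) := by
  have := (memLp_id_gaussianReal (μ := 0) (v := 1) 1).integrable (by norm_num)
  exact this.abs

lemma integrable_sum_abs (ι : Type*) [Fintype ι] :
    Integrable (fun g : ι → ℝ => ∑ i, |g i|) (_root_.stdGaussian ι) := by
  refine integrable_finsetSum _ fun i _ => ?_
  exact integrable_comp_eval (μ := fun _ : ι => gaussianReal 0 1) (i := i)
    integrable_gaussian_abs

/-- A Gaussian-integrable function dominating all mixed tensors. -/
def dom {ι : Type*} [Fintype ι] (ω : ι → ℝ) : ℝ := ∏ p, (1 + |ω p|)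

lemma dom_nonneg {ι : Type*} [Fintype ι] (ω : ι → ℝ) : 0 ≤ dom ω :=
  Finset.prod_nonneg fun _ _ => by positivity

lemma integrable_dom (ι : Type*) [Fintype ι] : Integrable (dom (ι := ι)) (_root_.stdGaussian ι) :=
  Integrable.fintype_prod (f := fun _ : ι => fun x : ℝ => 1 + |x|)
    (fun _ => (integrable_const 1).add integrable_gaussian_abs)

lemma abs_ten_mix_le (I : Finset (PIdx d)) (ω : PIdx d × Fin n → ℝ) {x : PIdx d → Fin n → ℝ}
    (hx : ∀ k i, |x k i| ≤ 1) (i' : PIdx d → Fin n) : |ten (mix I ω x) i'| ≤ dom ω := by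
  rw [ten, Finset.abs_prod, dom, Fintype.prod_prod_type]
  refine Finset.prod_le_prod (fun _ _ => abs_nonneg _) fun k _ => ?_
  have h1 : |mix I ω x k (i' k)| ≤ 1 + |ω (k, i' k)| := by
    unfold mix
    split_ifs
    · linarith
    · linarith [hx k (i' k), abs_nonneg (ω (k, i' k))]
  refine h1.trans ?_
  calc 1 + |ω (k, i' k)| = ∏ i, if i = i' k then 1 + |ω (k, i)| else 1 := by simp
    _ ≤ ∏ i, (1 + |ω (k, i)|) := by
      refine Finset.prod_le_prod (fun i _ => ?_) fun i _ => ?_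
      · split_ifs <;> positivity
      · split_ifs
        · exact le_rfl
        · linarith [abs_nonneg (ω (k, i))]

lemma continuous_ten_mix (I : Finset (PIdx d)) (x : PIdx d → Fin n → ℝ) (i' : PIdx d → Fin n) :
    Continuous fun ω : PIdx d × Fin n → ℝ => ten (mix I ω x) i' := by
  unfold ten
  refine continuous_finsetProd _ fun k _ => ?_
  unfold mix
  split_ifs <;> fun_prop

/-- The multilinear expansion of `⊗ (x^k + ε ω^k)`. -/
lemma ten_add_smul (x : PIdx d → Fin n → ℝ) (ε : ℝ) (ω : PIdx d × Fin n → ℝ) :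
    ten (fun k i => x k i + ε * ω (k, i)) =
      ∑ I : Finset (PIdx d), ε ^ I.card • ten (mix I ω x) := by
  funext i'
  simp only [ten, Finset.sum_apply, Pi.smul_apply, smul_eq_mul]
  have h : ∀ k, x k (i' k) + ε * ω (k, i' k) = ε * ω (k, i' k) + x k (i' k) :=
    fun k => add_comm _ _
  simp only [h]
  rw [Fintype.prod_add]
  refine Finset.sum_congr rfl fun I _ => ?_
  rw [Finset.prod_mul_distrib, Finset.prod_const, mul_assoc]
  congr 1
  rw [← Finset.prod_mul_prod_compl I (fun k => mix I ω x k (i' k))]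
  congr 1
  · exact Finset.prod_congr rfl fun k hk => by simp [mix, hk]
  · exact Finset.prod_congr rfl fun k hk => by simp [mix, Finset.mem_compl.1 hk]

lemma ten_mix_empty (ω : PIdx d × Fin n → ℝ) (x : PIdx d → Fin n → ℝ) :
    mix ∅ ω x = x := by
  funext k i; simp [mix]

lemma ten_mix_neg (I : Finset (PIdx d)) (ω : PIdx d × Fin n → ℝ) (x : PIdx d → Fin n → ℝ) :
    ten (mix I (-ω) x) = ((-1 : ℝ) ^ I.card) • ten (mix I ω x) := by
  funext i'
  simp only [ten, Pi.smul_apply, smul_eq_mul]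
  rw [← Finset.prod_const, ← Finset.prod_mul_prod_compl I (fun k => mix I (-ω) x k (i' k)),
    ← Finset.prod_mul_prod_compl I (fun k => mix I ω x k (i' k)), ← mul_assoc,
    ← Finset.prod_mul_distrib]
  congr 1
  · exact Finset.prod_congr rfl fun k hk => by simp [mix, hk]
  · exact Finset.prod_congr rfl fun k hk => by simp [mix, Finset.mem_compl.1 hk]

lemma rhoA_eq (A : (Fin (d + 1) → Fin n) → Fin m → ℝ) (z w : Pt n m d) :
    rhoA A z w = nrm (alv A (ten w.1) w.2 - alv A (ten z.1) z.2) := by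
  unfold rhoA nrm
  congr 1
  refine Finset.sum_congr rfl fun i1 _ => ?_
  congr 1
  simp only [alv, ten, Pi.sub_apply, ← Finset.sum_sub_distrib]
  exact Finset.sum_congr rfl fun _ _ => Finset.sum_congr rfl fun _ _ => by ring

variable {T : Set (Fin m → ℝ)} {M : ℝ}

lemma continuous_supT_ucoef (hT : GoodT T M) (A : (Fin (d + 1) → Fin n) → Fin m → ℝ)
    {X : Type*} [TopologicalSpace X] {θ : X → (PIdx d → Fin n) → ℝ} {g : X → Fin n → ℝ}
    (hθ : ∀ i', Continuous fun a => θ a i') (hg : ∀ i, Continuous fun a => g a i) :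
    Continuous fun a => supT T (ucoef A (θ a) (g a)) := by
  refine hT.continuous_supT.comp (continuous_pi fun j => ?_)
  unfold ucoef
  refine continuous_finsetSum _ fun i1 _ => continuous_finsetSum _ fun i' _ => ?_
  exact (continuous_const.mul (hg i1)).mul (hθ i')

lemma continuous_supT_ucoef_right (hT : GoodT T M) (A : (Fin (d + 1) → Fin n) → Fin m → ℝ)
    (θ : (PIdx d → Fin n) → ℝ) : Continuous fun g : Fin n → ℝ => supT T (ucoef A θ g) :=
  continuous_supT_ucoef hT A (X := Fin n → ℝ) (θ := fun _ => θ) (g := fun g => g)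
    (fun _ => continuous_const) (fun i => continuous_apply i)

lemma supT_ucoef_le (hT : GoodT T M) (A : (Fin (d + 1) → Fin n) → Fin m → ℝ)
    {θ : (PIdx d → Fin n) → ℝ} {G : ℝ} (hG : ∀ i', |θ i'| ≤ G) (hG0 : 0 ≤ G) (g : Fin n → ℝ) :
    supT T (ucoef A θ g) ≤ M * absA A * G * ∑ i1, |g i1| := by
  refine (hT.supT_bound _).trans ?_
  have := mul_le_mul_of_nonneg_left (sum_abs_ucoef_le A hG hG0 g) hT.nn
  linarith

lemma integrable_supT_ucoef (hT : GoodT T M) (A : (Fin (d + 1) → Fin n) → Fin m → ℝ)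
    (θ : (PIdx d → Fin n) → ℝ) :
    Integrable (fun g => supT T (ucoef A θ g)) (_root_.stdGaussian (Fin n)) := by
  have hG : ∀ i', |θ i'| ≤ ∑ i, |θ i| := fun i' =>
    Finset.single_le_sum (f := fun i => |θ i|) (fun _ _ => abs_nonneg _) (Finset.mem_univ i')
  have hG0 : 0 ≤ ∑ i, |θ i| := Finset.sum_nonneg fun _ _ => abs_nonneg _
  refine Integrable.mono' ((integrable_sum_abs (Fin n)).const_mul (M * absA A * ∑ i, |θ i|)) ?_
    (Filter.Eventually.of_forall fun g => ?_)
  · exact (continuous_supT_ucoef_right hT A θ).aestronglyMeasurable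
  · rw [Real.norm_eq_abs, abs_of_nonneg (hT.supT_nonneg _)]
    exact supT_ucoef_le hT A hG hG0 g

lemma beta_nonneg (hT : GoodT T M) (A : (Fin (d + 1) → Fin n) → Fin m → ℝ)
    (θ : (PIdx d → Fin n) → ℝ) : 0 ≤ betaN A T θ :=
  integral_nonneg fun _ => hT.supT_nonneg _

lemma suppFn_beta (hT : GoodT T M) (A : (Fin (d + 1) → Fin n) → Fin m → ℝ)
    (θ : (PIdx d → Fin n) → ℝ) :
    SuppFn (fun t => alv A θ t) T (fun g => supT T (ucoef A θ g)) (betaN A T θ) where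
  even g := by rw [ucoef_neg_right, hT.supT_neg]
  sub g g' := by rw [ucoef_add_right]; exact hT.supT_add _ _
  meas := (continuous_supT_ucoef_right hT A θ).measurable
  int := integrable_supT_ucoef hT A θ
  mean := le_rfl
  le t ht g := by rw [← sum_ucoef_mul]; exact hT.le_supT ht _

lemma beta_sum_le (hT : GoodT T M) (A : (Fin (d + 1) → Fin n) → Fin m → ℝ) {κ : Type*}
    (s : Finset κ) (c : κ → ℝ) (hc : ∀ a, 0 ≤ c a) (θ : κ → (PIdx d → Fin n) → ℝ) :
    betaN A T (∑ a ∈ s, c a • θ a) ≤ ∑ a ∈ s, c a * betaN A T (θ a) := by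
  unfold betaN
  simp only [← integral_const_mul]
  rw [← integral_finsetSum _ fun a _ => (integrable_supT_ucoef hT A (θ a)).const_mul (c a)]
  refine integral_mono (integrable_supT_ucoef hT A _)
    (integrable_finsetSum _ fun a _ => (integrable_supT_ucoef hT A (θ a)).const_mul (c a))
    fun g => ?_
  simp only [ucoef_sum_left]
  exact hT.supT_sum s c hc _

lemma beta_neg_one_pow (hT : GoodT T M) (A : (Fin (d + 1) → Fin n) → Fin m → ℝ) (k : ℕ)
    (θ : (PIdx d → Fin n) → ℝ) : betaN A T (((-1 : ℝ) ^ k) • θ) = betaN A T θ := by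
  unfold betaN
  congr 1; funext g
  rw [ucoef_smul_left]
  rcases neg_one_pow_eq_or ℝ k with h | h <;> rw [h]
  · rw [one_smul]
  · rw [neg_one_smul, hT.supT_neg]

lemma beta_le (hT : GoodT T M) (A : (Fin (d + 1) → Fin n) → Fin m → ℝ)
    {θ : (PIdx d → Fin n) → ℝ} {G : ℝ} (hG : ∀ i', |θ i'| ≤ G) (hG0 : 0 ≤ G) :
    betaN A T θ ≤ M * absA A * (∫ g, ∑ i, |g i| ∂(_root_.stdGaussian (Fin n))) * G := by
  have h := integral_mono (integrable_supT_ucoef hT A θ)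
    ((integrable_sum_abs (Fin n)).const_mul (M * absA A * G))
    (fun g => supT_ucoef_le hT A hG hG0 g)
  rw [integral_const_mul] at h
  unfold betaN
  linarith

lemma measurable_beta_mix (hT : GoodT T M) (A : (Fin (d + 1) → Fin n) → Fin m → ℝ)
    (I : Finset (PIdx d)) (x : PIdx d → Fin n → ℝ) :
    Measurable fun ω : PIdx d × Fin n → ℝ => betaN A T (ten (mix I ω x)) := by
  have hc : Continuous fun p : (PIdx d × Fin n → ℝ) × (Fin n → ℝ) =>
      supT T (ucoef A (ten (mix I p.1 x)) p.2) :=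
    continuous_supT_ucoef hT A (fun i' => (continuous_ten_mix I x i').comp continuous_fst)
      (fun i => (continuous_apply i).comp continuous_snd)
  exact (hc.stronglyMeasurable.integral_prod_right').measurable

lemma continuous_nrm_alv_mix (A : (Fin (d + 1) → Fin n) → Fin m → ℝ)
    (I : Finset (PIdx d)) (x : PIdx d → Fin n → ℝ) (t : Fin m → ℝ) :
    Continuous fun ω : PIdx d × Fin n → ℝ => nrm (alv A (ten (mix I ω x)) t) := by
  unfold nrm alv
  refine Real.continuous_sqrt.comp (continuous_finsetSum _ fun i1 _ => Continuous.pow ?_ 2)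
  refine continuous_finsetSum _ fun i' _ => continuous_finsetSum _ fun j _ => ?_
  exact (continuous_const.mul (continuous_ten_mix I x i')).mul continuous_const

lemma integrable_nrm_alv_mix (hT : GoodT T M) (A : (Fin (d + 1) → Fin n) → Fin m → ℝ)
    (I : Finset (PIdx d)) {x : PIdx d → Fin n → ℝ} (hx : ∀ k i, |x k i| ≤ 1)
    {t : Fin m → ℝ} (ht : t ∈ T) :
    Integrable (fun ω : PIdx d × Fin n → ℝ => nrm (alv A (ten (mix I ω x)) t))
      (_root_.stdGaussian _) := by
  refine Integrable.mono' ((integrable_dom _).const_mul (absA A * M))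
    (continuous_nrm_alv_mix A I x t).aestronglyMeasurable
    (Filter.Eventually.of_forall fun ω => ?_)
  rw [Real.norm_eq_abs, abs_of_nonneg (nrm_nonneg _)]
  exact nrm_alv_le A (abs_ten_mix_le I ω hx) (hT.bd t ht)

lemma integrable_beta_mix (hT : GoodT T M) (A : (Fin (d + 1) → Fin n) → Fin m → ℝ)
    (I : Finset (PIdx d)) {x : PIdx d → Fin n → ℝ} (hx : ∀ k i, |x k i| ≤ 1) :
    Integrable (fun ω : PIdx d × Fin n → ℝ => betaN A T (ten (mix I ω x)))
      (_root_.stdGaussian _) := by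
  refine Integrable.mono' ((integrable_dom _).const_mul
    (M * absA A * (∫ g, ∑ i, |g i| ∂(_root_.stdGaussian (Fin n)))))
    (measurable_beta_mix hT A I x).aestronglyMeasurable
    (Filter.Eventually.of_forall fun ω => ?_)
  rw [Real.norm_eq_abs, abs_of_nonneg (beta_nonneg hT A _)]
  exact beta_le hT A (abs_ten_mix_le I ω hx) (dom_nonneg ω)

/-! ### The quantities `W^U_I` and `V^U_I` -/

lemma WUI_eq (A : (Fin (d + 1) → Fin n) → Fin m → ℝ) (U : Set (Pt n m d)) (I : Finset (PIdx d)) :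
    WUI A U I = sSup { r : ℝ | ∃ z ∈ U, r = ∫ ω : PIdx d × Fin n → ℝ,
      nrm (alv A (ten (mix I ω z.1)) z.2) ∂(_root_.stdGaussian (PIdx d × Fin n)) } := rfl

lemma VUI_eq (A : (Fin (d + 1) → Fin n) → Fin m → ℝ) (U : Set (Pt n m d)) (I : Finset (PIdx d)) :
    VUI A T U I = sSup { r : ℝ | ∃ z ∈ U, r = ∫ ω : PIdx d × Fin n → ℝ,
      betaN A T (ten (mix I ω z.1)) ∂(_root_.stdGaussian (PIdx d × Fin n)) } := by
  have key : ∀ (θ : (PIdx d → Fin n) → ℝ) (g : Fin n → ℝ), supT T (ucoef A θ g) =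
      sSup { s : ℝ | ∃ t' ∈ T, s = ∑ i1 : Fin n, ∑ i' : PIdx d → Fin n, ∑ j : Fin m,
          A (ext0 i1 i') j * g i1 * θ i' * t' j } := by
    intro θ g
    unfold supT
    congr 1; ext s
    have : ∀ t' : Fin m → ℝ, ∑ j, ucoef A θ g j * t' j =
        ∑ i1 : Fin n, ∑ i' : PIdx d → Fin n, ∑ j : Fin m,
          A (ext0 i1 i') j * g i1 * θ i' * t' j := by
      intro t'
      simp only [ucoef, Finset.sum_mul]
      rw [Finset.sum_comm]
      exact Finset.sum_congr rfl fun i1 _ => Finset.sum_comm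
    simp only [this]
  unfold betaN
  simp only [key]
  rfl

lemma ballSet_coord {U : Set (Pt n m d)} (hU : U ⊆ ballSet n m d T) {z : Pt n m d} (hz : z ∈ U) :
    ∀ k i, |z.1 k i| ≤ 1 := by
  intro k i
  have h1 := (hU hz).1 k
  have h2 : z.1 k i ^ 2 ≤ ∑ j, z.1 k j ^ 2 :=
    Finset.single_le_sum (f := fun j => z.1 k j ^ 2) (fun _ _ => sq_nonneg _) (Finset.mem_univ i)
  exact (sq_le_one_iff_abs_le_one _).1 (h2.trans h1)

lemma WUI_nonneg (A : (Fin (d + 1) → Fin n) → Fin m → ℝ) (U : Set (Pt n m d))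
    (I : Finset (PIdx d)) : 0 ≤ WUI A U I := by
  rw [WUI_eq]
  refine Real.sSup_nonneg ?_
  rintro r ⟨z, _, rfl⟩
  exact integral_nonneg fun _ => nrm_nonneg _

lemma VUI_nonneg (hT : GoodT T M) (A : (Fin (d + 1) → Fin n) → Fin m → ℝ) (U : Set (Pt n m d))
    (I : Finset (PIdx d)) : 0 ≤ VUI A T U I := by
  rw [VUI_eq]
  refine Real.sSup_nonneg ?_
  rintro r ⟨z, _, rfl⟩
  exact integral_nonneg fun _ => beta_nonneg hT A _

lemma le_WUI (hT : GoodT T M) (A : (Fin (d + 1) → Fin n) → Fin m → ℝ) {U : Set (Pt n m d)}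
    (hU : U ⊆ ballSet n m d T) (I : Finset (PIdx d)) {z : Pt n m d} (hz : z ∈ U) :
    ∫ ω, nrm (alv A (ten (mix I ω z.1)) z.2) ∂(_root_.stdGaussian (PIdx d × Fin n)) ≤
      WUI A U I := by
  rw [WUI_eq]
  refine le_csSup ⟨∫ ω, absA A * M * dom ω ∂(_root_.stdGaussian (PIdx d × Fin n)), ?_⟩
    ⟨z, hz, rfl⟩
  rintro r ⟨w, hw, rfl⟩
  refine integral_mono (integrable_nrm_alv_mix hT A I (ballSet_coord hU hw) (hU hw).2)
    ((integrable_dom _).const_mul _) fun ω => ?_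
  exact nrm_alv_le A (abs_ten_mix_le I ω (ballSet_coord hU hw)) (hT.bd _ (hU hw).2)

lemma le_VUI (hT : GoodT T M) (A : (Fin (d + 1) → Fin n) → Fin m → ℝ) {U : Set (Pt n m d)}
    (hU : U ⊆ ballSet n m d T) (I : Finset (PIdx d)) {z : Pt n m d} (hz : z ∈ U) :
    ∫ ω, betaN A T (ten (mix I ω z.1)) ∂(_root_.stdGaussian (PIdx d × Fin n)) ≤
      VUI A T U I := by
  rw [VUI_eq]
  refine le_csSup ⟨∫ ω, M * absA A * (∫ g, ∑ i, |g i| ∂(_root_.stdGaussian (Fin n))) * dom ω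
    ∂(_root_.stdGaussian (PIdx d × Fin n)), ?_⟩ ⟨z, hz, rfl⟩
  rintro r ⟨w, hw, rfl⟩
  refine integral_mono (integrable_beta_mix hT A I (ballSet_coord hU hw))
    ((integrable_dom _).const_mul _) fun ω => ?_
  exact beta_le hT A (abs_ten_mix_le I ω (ballSet_coord hU hw)) (dom_nonneg ω)

lemma card_PIdx (d : ℕ) : Fintype.card (PIdx d) = d := by
  simp

lemma Wd_eq (A : (Fin (d + 1) → Fin n) → Fin m → ℝ) (U : Set (Pt n m d)) (s : ℝ) :
    Wd A U s = ∑ I ∈ Finset.univ.erase (∅ : Finset (PIdx d)), s ^ I.card * WUI A U I := by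
  have hmaps : ∀ I ∈ Finset.univ.erase (∅ : Finset (PIdx d)), I.card ∈ Finset.Icc 1 d := by
    intro I hI
    rw [Finset.mem_Icc]
    exact ⟨Finset.card_pos.2 (Finset.nonempty_iff_ne_empty.2 (Finset.ne_of_mem_erase hI)),
      (Finset.card_le_univ I).trans (card_PIdx d).le⟩
  rw [Wd, ← Finset.sum_fiberwise_of_maps_to hmaps]
  refine Finset.sum_congr rfl fun k hk => ?_
  rw [Finset.mul_sum]
  refine Finset.sum_congr ?_ fun I hI => by rw [(Finset.mem_filter.1 hI).2]
  ext I
  simp only [Finset.mem_filter, Finset.mem_univ, true_and, Finset.mem_erase, and_true]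
  refine ⟨fun h => ⟨?_, h⟩, fun h => h.2⟩
  rintro rfl
  simp at h
  rw [Finset.mem_Icc] at hk
  omega

lemma Vd_eq (A : (Fin (d + 1) → Fin n) → Fin m → ℝ) (U : Set (Pt n m d)) (s : ℝ) :
    Vd A T U s = s * ∑ I : Finset (PIdx d), s ^ I.card * VUI A T U I := by
  have hmaps : ∀ I ∈ (Finset.univ : Finset (Finset (PIdx d))), I.card ∈ Finset.range (d + 1) := by
    intro I _
    rw [Finset.mem_range, Nat.lt_succ_iff]
    exact (Finset.card_le_univ I).trans (card_PIdx d).le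
  rw [Vd, ← Finset.sum_fiberwise_of_maps_to hmaps, Finset.mul_sum]
  refine Finset.sum_congr rfl fun k _ => ?_
  rw [Finset.mul_sum, Finset.mul_sum]
  refine Finset.sum_congr rfl fun I hI => ?_
  rw [(Finset.mem_filter.1 hI).2]; ring

end norms

/-! ### Small ball estimate and packing bound -/

section main
variable {n m d : ℕ} {T : Set (Fin m → ℝ)} {M : ℝ}

/-- The set of `ω` for which, at the point `z`, `α_A` and `β_A` of all the mixed tensors are at most
`c` times the corresponding `W^U_I` and `V^U_I`. Bounding the mixed tensors one by one, rather than
the whole increment of `⊗ x^k`, makes the set symmetric. -/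
def goodSet (A : (Fin (d + 1) → Fin n) → Fin m → ℝ) (T : Set (Fin m → ℝ)) (U : Set (Pt n m d))
    (c : ℝ) (z : Pt n m d) : Set (PIdx d × Fin n → ℝ) :=
  {ω | ∀ I : Finset (PIdx d), nrm (alv A (ten (mix I ω z.1)) z.2) ≤ c * WUI A U I ∧
    betaN A T (ten (mix I ω z.1)) ≤ c * VUI A T U I}

lemma measurableSet_goodSet (hT : GoodT T M) (A : (Fin (d + 1) → Fin n) → Fin m → ℝ)
    (U : Set (Pt n m d)) (c : ℝ) (z : Pt n m d) : MeasurableSet (goodSet A T U c z) := by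
  have : goodSet A T U c z = ⋂ I : Finset (PIdx d),
      ({ω | nrm (alv A (ten (mix I ω z.1)) z.2) ≤ c * WUI A U I} ∩
        {ω | betaN A T (ten (mix I ω z.1)) ≤ c * VUI A T U I}) := by
    ext ω; simp [goodSet]
  rw [this]
  refine MeasurableSet.iInter fun I => MeasurableSet.inter ?_ ?_
  · exact measurableSet_le (continuous_nrm_alv_mix A I z.1 z.2).measurable measurable_const
  · exact measurableSet_le (measurable_beta_mix hT A I z.1) measurable_const

lemma goodSet_symm (hT : GoodT T M) (A : (Fin (d + 1) → Fin n) → Fin m → ℝ)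
    (U : Set (Pt n m d)) (c : ℝ) (z : Pt n m d) : ∀ ω ∈ goodSet A T U c z,
      -ω ∈ goodSet A T U c z := by
  intro ω hω I
  rw [ten_mix_neg, beta_neg_one_pow hT, alv_smul_left, nrm_smul, abs_pow, abs_neg, abs_one,
    one_pow, one_mul]
  exact hω I

lemma half_le_goodSet (hT : GoodT T M) (A : (Fin (d + 1) → Fin n) → Fin m → ℝ)
    {U : Set (Pt n m d)} (hU : U ⊆ ballSet n m d T) {z : Pt n m d} (hz : z ∈ U) :
    1 / 2 ≤ (_root_.stdGaussian (PIdx d × Fin n)).real (goodSet A T U (4 * 2 ^ d) z) := by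
  set μ := _root_.stdGaussian (PIdx d × Fin n)
  set c : ℝ := 4 * 2 ^ d with hc
  have hcpos : 0 < c := by positivity
  let bad : Finset (PIdx d) → Set (PIdx d × Fin n → ℝ) := fun I =>
    {ω | c * WUI A U I < nrm (alv A (ten (mix I ω z.1)) z.2)} ∪
      {ω | c * VUI A T U I < betaN A T (ten (mix I ω z.1))}
  have hbad : ∀ I, μ.real (bad I) ≤ 2 / c := by
    intro I
    refine (measureReal_union_le _ _).trans ?_
    have h1 := markov_gt μ (fun ω => nrm_nonneg _)
      (integrable_nrm_alv_mix hT A I (ballSet_coord hU hz) (hU hz).2) (le_WUI hT A hU I hz) hcpos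
    have h2 := markov_gt μ (fun ω => beta_nonneg hT A _)
      (integrable_beta_mix hT A I (ballSet_coord hU hz)) (le_VUI hT A hU I hz) hcpos
    calc _ ≤ 1 / c + 1 / c := add_le_add h1 h2
      _ = 2 / c := by ring
  have hsub : (goodSet A T U c z)ᶜ ⊆ ⋃ I ∈ (Finset.univ : Finset (Finset (PIdx d))), bad I := by
    intro ω hω
    by_contra hcon
    apply hω
    intro I
    have : ω ∉ bad I := fun h => hcon (by
      simp only [Set.mem_iUnion]
      exact ⟨I, Finset.mem_univ I, h⟩)
    constructor
    · by_contra h; exact this (Or.inl (not_le.1 h))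
    · by_contra h; exact this (Or.inr (not_le.1 h))
  have h3 : μ.real (goodSet A T U c z)ᶜ ≤ 1 / 2 := by
    calc μ.real (goodSet A T U c z)ᶜ
        ≤ μ.real (⋃ I ∈ (Finset.univ : Finset (Finset (PIdx d))), bad I) :=
          measureReal_mono hsub (measure_ne_top _ _)
      _ ≤ ∑ I : Finset (PIdx d), μ.real (bad I) := measureReal_biUnion_finset_le _ _
      _ ≤ ∑ _I : Finset (PIdx d), 2 / c := Finset.sum_le_sum fun I _ => hbad I
      _ = 1 / 2 := by
          rw [Finset.sum_const, nsmul_eq_mul, Finset.card_univ, Fintype.card_finset, card_PIdx, hc]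
          push_cast
          field_simp
          norm_num
  rw [probReal_compl_eq_one_sub (measurableSet_goodSet hT A U c z)] at h3
  linarith

/-- The vectors `x` in the coordinates of the Gaussian space. -/
def flat (x : PIdx d → Fin n → ℝ) : PIdx d × Fin n → ℝ := fun p => x p.1 p.2

lemma sum_flat_le {z : Pt n m d} (hz : z ∈ ballSet n m d T) {ε : ℝ} :
    ∑ p, (ε⁻¹ • flat z.1) p ^ 2 ≤ d * ε⁻¹ ^ 2 := by
  rw [Fintype.sum_prod_type]
  calc ∑ k, ∑ i, (ε⁻¹ • flat z.1) (k, i) ^ 2 = ∑ k, ε⁻¹ ^ 2 * ∑ i, z.1 k i ^ 2 := by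
        refine Finset.sum_congr rfl fun k _ => ?_
        rw [Finset.mul_sum]
        exact Finset.sum_congr rfl fun i _ => by simp [flat, mul_pow]
    _ ≤ ∑ _k : PIdx d, ε⁻¹ ^ 2 * 1 :=
        Finset.sum_le_sum fun k _ => mul_le_mul_of_nonneg_left (hz.1 k) (by positivity)
    _ = d * ε⁻¹ ^ 2 := by
        rw [Finset.sum_const, nsmul_eq_mul, Finset.card_univ, card_PIdx, mul_one]

/-- On the event of the small ball estimate, `⊗ y^k` with `y = ε ω` is close to `⊗ x^k` in `α_A`
and not too large in `β_A`. -/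
lemma goodSet_bounds (hT : GoodT T M) (A : (Fin (d + 1) → Fin n) → Fin m → ℝ)
    {U : Set (Pt n m d)} {c ε : ℝ} (hε : 0 < ε) {z : Pt n m d} {ω : PIdx d × Fin n → ℝ}
    (hω : ω - ε⁻¹ • flat z.1 ∈ goodSet A T U c z) :
    nrm (alv A (ten fun k i => ε * ω (k, i)) z.2 - alv A (ten z.1) z.2) ≤ c * Wd A U ε ∧
    ε * betaN A T (ten fun k i => ε * ω (k, i)) ≤ c * Vd A T U ε := by
  set ω' := ω - ε⁻¹ • flat z.1 with hω'
  have e : ten (fun k i => ε * ω (k, i)) = ∑ I : Finset (PIdx d), ε ^ I.card • ten (mix I ω' z.1) := by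
    rw [← ten_add_smul]
    congr 1; funext k i
    simp only [hω', flat, Pi.sub_apply, Pi.smul_apply, smul_eq_mul]
    field_simp; ring
  constructor
  · rw [e, alv_sum_left, ← Finset.add_sum_erase _ _ (Finset.mem_univ (∅ : Finset (PIdx d)))]
    simp only [Finset.card_empty, pow_zero, one_smul, ten_mix_empty, add_sub_cancel_left]
    refine (nrm_sum_le _ _).trans ?_
    rw [Wd_eq, Finset.mul_sum]
    refine Finset.sum_le_sum fun I _ => ?_
    rw [nrm_smul, abs_of_nonneg (by positivity), mul_left_comm]
    exact mul_le_mul_of_nonneg_left (hω I).1 (by positivity)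
  · rw [Vd_eq, mul_left_comm]
    refine mul_le_mul_of_nonneg_left ?_ hε.le
    rw [e, Finset.mul_sum]
    refine (beta_sum_le hT A _ _ (fun I => by positivity) _).trans
      (Finset.sum_le_sum fun I _ => ?_)
    rw [mul_left_comm]
    exact mul_le_mul_of_nonneg_left (hω I).2 (by positivity)

lemma Wd_nonneg (A : (Fin (d + 1) → Fin n) → Fin m → ℝ) (U : Set (Pt n m d)) {s : ℝ}
    (hs : 0 ≤ s) : 0 ≤ Wd A U s := by
  rw [Wd_eq]
  exact Finset.sum_nonneg fun I _ => mul_nonneg (by positivity) (WUI_nonneg A U I)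

lemma Vd_nonneg (hT : GoodT T M) (A : (Fin (d + 1) → Fin n) → Fin m → ℝ) (U : Set (Pt n m d))
    {s : ℝ} (hs : 0 ≤ s) : 0 ≤ Vd A T U s := by
  rw [Vd_eq]
  exact mul_nonneg hs
    (Finset.sum_nonneg fun I _ => mul_nonneg (by positivity) (VUI_nonneg hT A U I))

/-- The packing bound. Each point `z` of a separated set owns an event of probability at least
`exp (-d ε⁻² / 2) / 2`; by Sudakov's minoration, applied to the metric `α_A (⊗ y^k ⊗ ·)` on `T`, at
most `exp (1024 ε⁻²)` of these events meet at a single `y`. -/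
lemma packing_bound (hT : GoodT T M) (A : (Fin (d + 1) → Fin n) → Fin m → ℝ)
    {U : Set (Pt n m d)} (hU : U ⊆ ballSet n m d T) {ε c : ℝ} (hε : 0 < ε) (hc : c = 4 * 2 ^ d)
    (S : Finset (Pt n m d)) (hSU : ↑S ⊆ U)
    (hsep : ∀ z ∈ S, ∀ w ∈ S, z ≠ w → 2 * c * Wd A U ε + c * Vd A T U ε < rhoA A z w) :
    (S.card : ℝ) ≤ 2 * Real.exp ((d / 2 + 1024) * ε⁻¹ ^ 2) := by
  set μ := _root_.stdGaussian (PIdx d × Fin n)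
  have hc0 : 0 ≤ c := by rw [hc]; positivity
  let E : Pt n m d → Set (PIdx d × Fin n → ℝ) := fun z =>
    {ω | ω - ε⁻¹ • flat z.1 ∈ goodSet A T U c z}
  have hE : ∀ z ∈ S, MeasurableSet (E z) := fun z _ =>
    measurableSet_preimage (by fun_prop) (measurableSet_goodSet hT A U c z)
  have hEμ : ∀ z ∈ S, Real.exp (-(d / 2 * ε⁻¹ ^ 2)) * (1 / 2) ≤ μ.real (E z) := by
    intro z hz
    refine le_trans ?_ (gaussian_shift (measurableSet_goodSet hT A U c z)
      (goodSet_symm hT A U c z) (ε⁻¹ • flat z.1))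
    refine mul_le_mul (Real.exp_le_exp.2 ?_) ?_ (by norm_num) (Real.exp_pos _).le
    · have := sum_flat_le (ε := ε) (hU (hSU hz))
      linarith
    · rw [hc]; exact half_le_goodSet hT A hU (hSU hz)
  have hcount : ∀ ω, ((S.filter fun z => ω ∈ E z).card : ℝ) ≤ Real.exp (1024 * ε⁻¹ ^ 2) := by
    intro ω
    set y : PIdx d → Fin n → ℝ := fun k i => ε * ω (k, i) with hy
    set F := S.filter fun z => ω ∈ E z with hF
    have hb : ∀ z ∈ F, nrm (alv A (ten y) z.2 - alv A (ten z.1) z.2) ≤ c * Wd A U ε ∧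
        ε * betaN A T (ten y) ≤ c * Vd A T U ε := fun z hz =>
      goodSet_bounds hT A hε (Finset.mem_filter.1 hz).2
    rcases F.eq_empty_or_nonempty with h0 | ⟨z0, hz0⟩
    · rw [h0]; simp only [Finset.card_empty, Nat.cast_zero]; exact (Real.exp_pos _).le
    have hsep' : ∀ z ∈ F, ∀ w ∈ F, z ≠ w →
        c * Vd A T U ε < nrm (alv A (ten y) z.2 - alv A (ten y) w.2) := by
      intro z hz w hw hzw
      have h1 := hsep z (Finset.mem_filter.1 hz).1 w (Finset.mem_filter.1 hw).1 hzw
      rw [rhoA_eq, nrm_sub_comm] at h1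
      have h2 := (hb z hz).1
      have h3 := (hb w hw).1
      rw [nrm_sub_comm] at h2
      have e : alv A (ten z.1) z.2 - alv A (ten w.1) w.2 =
          (alv A (ten z.1) z.2 - alv A (ten y) z.2) +
            ((alv A (ten y) z.2 - alv A (ten y) w.2) +
              (alv A (ten y) w.2 - alv A (ten w.1) w.2)) := by abel
      rw [e] at h1
      have h4 := nrm_add_le (alv A (ten z.1) z.2 - alv A (ten y) z.2)
        ((alv A (ten y) z.2 - alv A (ten y) w.2) + (alv A (ten y) w.2 - alv A (ten w.1) w.2))
      have h5 := nrm_add_le (alv A (ten y) z.2 - alv A (ten y) w.2)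
        (alv A (ten y) w.2 - alv A (ten w.1) w.2)
      linarith
    have hr : 0 ≤ c * Vd A T U ε := mul_nonneg hc0 (Vd_nonneg hT A U hε.le)
    -- Distinct points of `F` have distinct `T`-components, so `F` is counted by its projection.
    have hinj : Set.InjOn (fun z : Pt n m d => z.2) F := by
      intro z hz w hw hzw
      by_contra hne
      have h1 := hsep' z hz w hw hne
      have h2 : z.2 = w.2 := hzw
      rw [h2, sub_self, nrm_zero] at h1
      linarith
    rw [← Finset.card_image_of_injOn hinj]
    refine (suppFn_beta hT A (ten y)).sudakov hr (q := ε⁻¹) ?_ _ ?_ ?_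
    · rw [inv_mul_eq_div, le_div_iff₀ hε, mul_comm]
      exact (hb z0 hz0).2
    · intro t ht
      obtain ⟨z, hz, rfl⟩ := Finset.mem_image.1 (Finset.mem_coe.1 ht)
      exact (hU (hSU (Finset.mem_filter.1 hz).1)).2
    · intro a ha b hb hab
      obtain ⟨z, hz, rfl⟩ := Finset.mem_image.1 ha
      obtain ⟨w, hw, rfl⟩ := Finset.mem_image.1 hb
      exact hsep' z hz w hw fun h => hab (by rw [h])
  have h1 := sum_measure_le μ S E hE _ hcount
  have h2 := (Finset.sum_le_sum hEμ).trans h1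
  rw [Finset.sum_const, nsmul_eq_mul, Real.exp_neg] at h2
  have h3 : Real.exp ((d / 2 + 1024) * ε⁻¹ ^ 2) =
      Real.exp (d / 2 * ε⁻¹ ^ 2) * Real.exp (1024 * ε⁻¹ ^ 2) := by
    rw [← Real.exp_add]; congr 1; ring
  rw [h3]
  have hpos := Real.exp_pos (d / 2 * ε⁻¹ ^ 2)
  have h4 := mul_le_mul_of_nonneg_left h2 hpos.le
  have h5 : Real.exp (d / 2 * ε⁻¹ ^ 2) *
      (S.card * ((Real.exp (d / 2 * ε⁻¹ ^ 2))⁻¹ * (1 / 2))) = S.card / 2 := by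
    field_simp
  rw [h5] at h4
  linarith

/-! ### The covering bounds -/

lemma rhoA_symm (A : (Fin (d + 1) → Fin n) → Fin m → ℝ) (z w : Pt n m d) :
    rhoA A z w = rhoA A w z := by
  rw [rhoA_eq, rhoA_eq, nrm_sub_comm]

lemma Wd_scale (A : (Fin (d + 1) → Fin n) → Fin m → ℝ) (U : Set (Pt n m d)) {s a : ℝ}
    (hs : 0 ≤ s) (ha : 0 ≤ a) (ha1 : a ≤ 1) : Wd A U (a * s) ≤ a * Wd A U s := by
  rw [Wd_eq, Wd_eq, Finset.mul_sum]
  refine Finset.sum_le_sum fun I hI => ?_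
  rw [← mul_assoc, mul_pow]
  refine mul_le_mul_of_nonneg_right (mul_le_mul_of_nonneg_right ?_ (by positivity))
    (WUI_nonneg A U I)
  refine pow_le_of_le_one ha ha1 ?_
  exact (Finset.card_pos.2 (Finset.nonempty_iff_ne_empty.2 (Finset.ne_of_mem_erase hI))).ne'

lemma Vd_scale (hT : GoodT T M) (A : (Fin (d + 1) → Fin n) → Fin m → ℝ) (U : Set (Pt n m d))
    {s a : ℝ} (hs : 0 ≤ s) (ha : 0 ≤ a) (ha1 : a ≤ 1) :
    Vd A T U (a * s) ≤ a * Vd A T U s := by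
  rw [Vd_eq, Vd_eq, mul_assoc]
  refine mul_le_mul_of_nonneg_left (mul_le_mul_of_nonneg_left ?_ hs) ha
  refine Finset.sum_le_sum fun I _ => mul_le_mul_of_nonneg_right ?_ (VUI_nonneg hT A U I)
  exact pow_le_pow_left₀ (mul_nonneg ha hs) (mul_le_of_le_one_left hs ha1) _

/-- The constant in the covering bound for chaoses of order `d + 1`. -/
noncomputable def covConst (d : ℕ) : ℝ := 256 + (d / 2 + 1024) * (4 * (4 * 2 ^ d)) ^ 2

lemma covConst_pos (d : ℕ) : 0 < covConst d := by unfold covConst; positivity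

/-- For large `ε` a single ball suffices, because `V^U_∅` dominates the radius of `U`. -/
lemma one_ball (hT : GoodT T M) (A : (Fin (d + 1) → Fin n) → Fin m → ℝ)
    {U : Set (Pt n m d)} (hU : U ⊆ ballSet n m d T) {ε : ℝ} (hε : 16 ≤ ε) {z : Pt n m d}
    (hz : z ∈ U) : rhoA A (fun _ _ => 0, 0) z ≤ (Wd A U ε + Vd A T U ε) / 2 := by
  have h0 : alv A (ten (fun _ _ => 0 : PIdx d → Fin n → ℝ)) (0 : Fin m → ℝ) = 0 := by
    funext i; simp [alv]
  rw [rhoA_eq]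
  simp only [h0, sub_zero]
  have h1 := (suppFn_beta hT A (ten z.1)).nrm_le (hU hz).2
  have h2 := le_VUI hT A hU ∅ hz
  simp only [ten_mix_empty] at h2
  rw [integral_const, probReal_univ, one_smul] at h2
  have h3 : VUI A T U ∅ ≤ ∑ I : Finset (PIdx d), ε ^ I.card * VUI A T U I := by
    have := Finset.single_le_sum (f := fun I : Finset (PIdx d) => ε ^ I.card * VUI A T U I)
      (fun I _ => mul_nonneg (by positivity) (VUI_nonneg hT A U I))
      (Finset.mem_univ (∅ : Finset (PIdx d)))
    simpa using this
  have h4 := VUI_nonneg hT A U ∅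
  have h5 := Wd_nonneg A U (s := ε) (by linarith)
  have h6 : 16 * VUI A T U ∅ ≤ Vd A T U ε := by
    rw [Vd_eq]
    exact mul_le_mul hε h3 h4 (by linarith)
  linarith

/-- Below `ε = 16` a maximal packing at the scale `ε / (4 c)` is the required net. -/
lemma exists_cover (hT : GoodT T M) (A : (Fin (d + 1) → Fin n) → Fin m → ℝ)
    {U : Set (Pt n m d)} (hU : U ⊆ ballSet n m d T) {ε : ℝ} (hε : 0 < ε) :
    ∃ c : Finset (Pt n m d), (c.card : ℝ) ≤ Real.exp (covConst d * ε⁻¹ ^ 2) ∧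
      ∀ y ∈ U, ∃ x ∈ c, rhoA A x y ≤ (Wd A U ε + Vd A T U ε) / 2 := by
  by_cases hbig : 16 ≤ ε
  · refine ⟨{(fun _ _ => 0, 0)}, ?_, fun y hy => ⟨_, Finset.mem_singleton_self _,
      one_ball hT A hU hbig hy⟩⟩
    simp only [Finset.card_singleton, Nat.cast_one]
    exact Real.one_le_exp (mul_nonneg (covConst_pos d).le (by positivity))
  push Not at hbig
  set c : ℝ := 4 * 2 ^ d with hc
  have hc1 : 1 ≤ c := by
    have : (1 : ℝ) ≤ 2 ^ d := one_le_pow₀ (by norm_num)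
    linarith
  set ε' : ℝ := (4 * c)⁻¹ * ε with hε'
  have hε'0 : 0 < ε' := by positivity
  have ha1 : (4 * c)⁻¹ ≤ 1 := inv_le_one_of_one_le₀ (by linarith)
  have hW := Wd_scale A U hε.le (by positivity) ha1
  have hV := Vd_scale hT A U hε.le (by positivity) ha1
  rw [← hε'] at hW hV
  have hr : 2 * c * Wd A U ε' + c * Vd A T U ε' ≤ (Wd A U ε + Vd A T U ε) / 2 := by
    have h1 : 2 * c * Wd A U ε' ≤ Wd A U ε / 2 := by
      calc 2 * c * Wd A U ε' ≤ 2 * c * ((4 * c)⁻¹ * Wd A U ε) :=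
            mul_le_mul_of_nonneg_left hW (by positivity)
        _ = Wd A U ε / 2 := by field_simp; norm_num
    have h2 : c * Vd A T U ε' ≤ Vd A T U ε / 4 := by
      calc c * Vd A T U ε' ≤ c * ((4 * c)⁻¹ * Vd A T U ε) :=
            mul_le_mul_of_nonneg_left hV (by positivity)
        _ = Vd A T U ε / 4 := by field_simp
    have := Vd_nonneg hT A U hε.le
    linarith
  have hr0 : 0 ≤ 2 * c * Wd A U ε' + c * Vd A T U ε' := by
    have := Wd_nonneg A U hε'0.le
    have := Vd_nonneg hT A U hε'0.le
    positivity
  obtain ⟨N, -, -, hcard, hcov⟩ := exists_net U (rhoA A) (2 * c * Wd A U ε' + c * Vd A T U ε')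
    (2 * Real.exp ((d / 2 + 1024) * ε'⁻¹ ^ 2)) (rhoA_symm A)
    (fun x => by rw [rhoA_eq, sub_self, nrm_zero]; exact hr0)
    (fun S hS hsep => packing_bound hT A hU hε'0 hc S hS hsep)
  refine ⟨N, hcard.trans ?_, fun y hy => ?_⟩
  · have h2 : (2 : ℝ) ≤ Real.exp (256 * ε⁻¹ ^ 2) := by
      have h3 : 1 ≤ 16 * ε⁻¹ := by
        rw [← div_eq_mul_inv, le_div_iff₀ hε]; linarith
      have h4 : 1 ≤ 256 * ε⁻¹ ^ 2 := by nlinarith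
      linarith [Real.add_one_le_exp (256 * ε⁻¹ ^ 2)]
    calc 2 * Real.exp ((d / 2 + 1024) * ε'⁻¹ ^ 2)
        ≤ Real.exp (256 * ε⁻¹ ^ 2) * Real.exp ((d / 2 + 1024) * ε'⁻¹ ^ 2) :=
          mul_le_mul_of_nonneg_right h2 (Real.exp_pos _).le
      _ = Real.exp (covConst d * ε⁻¹ ^ 2) := by
          rw [← Real.exp_add]; congr 1
          rw [covConst, hε', ← hc, mul_inv, inv_inv]; ring
  · obtain ⟨x, hx, hxy⟩ := hcov y hy
    exact ⟨x, hx, hxy.trans hr⟩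

end main

/-! ### Covering numbers -/

lemma covNum_le {β : Type*} {S : Set β} {ρ : β → β → ℝ} {r : ℝ} (c : Finset β)
    (hc : ∀ y ∈ S, ∃ x ∈ c, ρ x y ≤ r / 2) : covNum S ρ r ≤ c.card := by
  refine csInf_le ⟨0, ?_⟩ ⟨c, rfl, fun y hy => ?_⟩
  · rintro N ⟨c', rfl, -⟩
    positivity
  · obtain ⟨x, hx, hxy⟩ := hc y hy
    simp only [Set.mem_iUnion]
    exact ⟨x, hx, hxy⟩

lemma covNum_nonneg {β : Type*} (S : Set β) (ρ : β → β → ℝ) (r : ℝ) : 0 ≤ covNum S ρ r := by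
  refine Real.sInf_nonneg ?_
  rintro N ⟨c', rfl, -⟩
  positivity

/-- If the `p`-th root of `w / δ` is at most `Q`, then `s ^ p * w` is a small multiple of `δ` as
soon as `s * Q` is small. -/
lemma pow_mul_le_of_root {w δ Q s D e : ℝ} {p : ℕ} (hw : 0 ≤ w) (hδ : 0 < δ) (hs : 0 ≤ s)
    (hD : 1 ≤ D) (hp : 1 ≤ p) (he : e = (p : ℝ)) (hQ : w ^ (1 / e) * δ ^ (-(1 / e)) ≤ Q)
    (hsQ : s * Q ≤ D⁻¹) : s ^ p * w ≤ D⁻¹ * δ := by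
  subst he
  set x : ℝ := w ^ (1 / (p : ℝ)) * δ ^ (-(1 / (p : ℝ))) with hx
  have hp0 : (p : ℝ) ≠ 0 := by positivity
  have hx0 : 0 ≤ x := by positivity
  have hpow : x ^ p * δ = w := by
    have e1 : (w ^ (1 / (p : ℝ))) ^ p = w := by
      rw [← Real.rpow_natCast, ← Real.rpow_mul hw, one_div_mul_cancel hp0, Real.rpow_one]
    have e2 : (δ ^ (-(1 / (p : ℝ)))) ^ p = δ⁻¹ := by
      rw [← Real.rpow_natCast, ← Real.rpow_mul hδ.le, neg_mul, one_div_mul_cancel hp0,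
        Real.rpow_neg_one]
    rw [hx, mul_pow, e1, e2, mul_assoc, inv_mul_cancel₀ hδ.ne', mul_one]
  have hsx : s * x ≤ D⁻¹ := (mul_le_mul_of_nonneg_left hQ hs).trans hsQ
  have hsx0 : 0 ≤ s * x := mul_nonneg hs hx0
  have hD1 : D⁻¹ ≤ 1 := inv_le_one_of_one_le₀ hD
  have h1 : (s * x) ^ p ≤ D⁻¹ :=
    (pow_le_of_le_one hsx0 (hsx.trans hD1) (by omega)).trans hsx
  calc s ^ p * w = (s * x) ^ p * δ := by rw [← hpow, mul_pow]; ring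
    _ ≤ D⁻¹ * δ := mul_le_mul_of_nonneg_right h1 hδ.le

/-- The bracket on the right-hand side of the entropy estimate at scale `δ`. -/
noncomputable def entBracket {n m d : ℕ} (A : (Fin (d + 1) → Fin n) → Fin m → ℝ)
    (T : Set (Fin m → ℝ)) (U : Set (Pt n m d)) (δ : ℝ) : ℝ :=
  (∑ k ∈ Finset.Icc 1 d,
      (∑ I ∈ Finset.univ.filter (fun I : Finset (PIdx d) => I.card = k),
        WUI A U I) ^ (1 / (k : ℝ)) * δ ^ (-(1 / (k : ℝ))))
    + ∑ k ∈ Finset.range (d + 1),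
      (∑ I ∈ Finset.univ.filter (fun I : Finset (PIdx d) => I.card = k),
        VUI A T U I) ^ (1 / ((k : ℝ) + 1)) * δ ^ (-(1 / ((k : ℝ) + 1)))

section
variable {n m d : ℕ} {T : Set (Fin m → ℝ)} {M : ℝ} {U : Set (Pt n m d)} {δ : ℝ}

lemma entBracket_nonneg (hT : GoodT T M) (A : (Fin (d + 1) → Fin n) → Fin m → ℝ) (hδ : 0 < δ) :
    0 ≤ entBracket A T U δ :=
  add_nonneg
    (Finset.sum_nonneg fun _ _ => mul_nonneg (Real.rpow_nonneg
      (Finset.sum_nonneg fun _ _ => WUI_nonneg A U _) _) (Real.rpow_nonneg hδ.le _))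
    (Finset.sum_nonneg fun _ _ => mul_nonneg (Real.rpow_nonneg
      (Finset.sum_nonneg fun _ _ => VUI_nonneg hT A U _) _) (Real.rpow_nonneg hδ.le _))

/-- `W_d(s) + V_d(s)` has `2 d + 1` summands, each at most `δ / (2 d + 1)` for small `s`. -/
lemma Wd_add_Vd_le (hT : GoodT T M) (A : (Fin (d + 1) → Fin n) → Fin m → ℝ) (hδ : 0 < δ)
    {s : ℝ} (hs : 0 ≤ s) (hsQ : s * entBracket A T U δ ≤ (2 * (d : ℝ) + 1)⁻¹) :
    Wd A U s + Vd A T U s ≤ δ := by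
  set D : ℝ := 2 * (d : ℝ) + 1 with hD
  have hD1 : 1 ≤ D := by rw [hD]; linarith [(Nat.cast_nonneg d : (0 : ℝ) ≤ d)]
  have hW : ∀ k, 0 ≤ ∑ I ∈ Finset.univ.filter (fun I : Finset (PIdx d) => I.card = k), WUI A U I :=
    fun k => Finset.sum_nonneg fun _ _ => WUI_nonneg A U _
  have hV : ∀ k, 0 ≤ ∑ I ∈ Finset.univ.filter (fun I : Finset (PIdx d) => I.card = k),
      VUI A T U I := fun k => Finset.sum_nonneg fun _ _ => VUI_nonneg hT A U _
  have hWt : ∀ k ∈ Finset.Icc 1 d, 0 ≤ (∑ I ∈ Finset.univ.filter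
      (fun I : Finset (PIdx d) => I.card = k), WUI A U I) ^ (1 / (k : ℝ)) * δ ^ (-(1 / (k : ℝ))) :=
    fun k _ => mul_nonneg (Real.rpow_nonneg (hW k) _) (Real.rpow_nonneg hδ.le _)
  have hVt : ∀ k ∈ Finset.range (d + 1), 0 ≤ (∑ I ∈ Finset.univ.filter
      (fun I : Finset (PIdx d) => I.card = k), VUI A T U I) ^ (1 / ((k : ℝ) + 1)) *
      δ ^ (-(1 / ((k : ℝ) + 1))) :=
    fun k _ => mul_nonneg (Real.rpow_nonneg (hV k) _) (Real.rpow_nonneg hδ.le _)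
  have h1 : Wd A U s ≤ ∑ _k ∈ Finset.Icc 1 d, D⁻¹ * δ := by
    refine Finset.sum_le_sum fun k hk => ?_
    refine pow_mul_le_of_root (hW k) hδ hs hD1 (Finset.mem_Icc.1 hk).1 rfl ?_ hsQ
    exact (Finset.single_le_sum hWt hk).trans (le_add_of_nonneg_right (Finset.sum_nonneg hVt))
  have h2 : Vd A T U s ≤ ∑ _k ∈ Finset.range (d + 1), D⁻¹ * δ := by
    refine Finset.sum_le_sum fun k hk => ?_
    refine pow_mul_le_of_root (hV k) hδ hs hD1 (Nat.le_add_left 1 k) (Nat.cast_succ k).symm ?_ hsQ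
    exact (Finset.single_le_sum hVt hk).trans (le_add_of_nonneg_left (Finset.sum_nonneg hWt))
  rw [Finset.sum_const, nsmul_eq_mul, Nat.card_Icc, Nat.add_sub_cancel] at h1
  rw [Finset.sum_const, nsmul_eq_mul, Finset.card_range] at h2
  push_cast at h2
  calc Wd A U s + Vd A T U s ≤ d * (D⁻¹ * δ) + (d + 1) * (D⁻¹ * δ) := add_le_add h1 h2
    _ = D * D⁻¹ * δ := by rw [hD]; ring
    _ = δ := by rw [mul_inv_cancel₀ (by positivity), one_mul]

lemma sqrt_log_covNum_le (hT : GoodT T M) (A : (Fin (d + 1) → Fin n) → Fin m → ℝ)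
    (hU : U ⊆ ballSet n m d T) (hδ : 0 < δ) {s : ℝ} (hs : 0 < s)
    (hsQ : s * entBracket A T U δ ≤ (2 * (d : ℝ) + 1)⁻¹) :
    Real.sqrt (Real.log (covNum U (rhoA A) δ)) ≤ Real.sqrt (covConst d) * s⁻¹ := by
  obtain ⟨c, hcard, hcov⟩ := exists_cover hT A hU hs
  have hle := Wd_add_Vd_le hT A hδ hs.le hsQ
  have h1 : covNum U (rhoA A) δ ≤ Real.exp (covConst d * s⁻¹ ^ 2) := by
    refine (covNum_le c fun y hy => ?_).trans hcard
    obtain ⟨x, hx, hxy⟩ := hcov y hy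
    exact ⟨x, hx, hxy.trans (by linarith)⟩
  have hC := covConst_pos d
  have h2 : Real.log (covNum U (rhoA A) δ) ≤ covConst d * s⁻¹ ^ 2 := by
    rcases (covNum_nonneg U (rhoA A) δ).eq_or_lt with h0 | h0
    · rw [← h0, Real.log_zero]; positivity
    · exact (Real.log_le_iff_le_exp h0).2 h1
  calc Real.sqrt (Real.log (covNum U (rhoA A) δ)) ≤ Real.sqrt (covConst d * s⁻¹ ^ 2) :=
        Real.sqrt_le_sqrt h2
    _ = Real.sqrt (covConst d) * s⁻¹ := by
        rw [Real.sqrt_mul hC.le, Real.sqrt_sq (by positivity)]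

end

/- Here the chaos is of order `d+1`: the paper's `d` equals `d+1 ≥ 2` below. -/
theorem entropy_bounds (d : ℕ) (hd : 1 ≤ d) :
    ∃ C : ℝ, 0 < C ∧
      ∀ (n m : ℕ) (A : (Fin (d + 1) → Fin n) → Fin m → ℝ)
        (T : Set (Fin m → ℝ)), T.Nonempty → Bornology.IsBounded T → T = -T →
        ∀ U : Set (Pt n m d), U ⊆ ballSet n m d T →
        ∀ ε : ℝ, 0 < ε → ∀ δ : ℝ, 0 < δ →
        covNum U (rhoA A) (Wd A U ε + Vd A T U ε) ≤ Real.exp (C * ε⁻¹ ^ 2) ∧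
        Real.sqrt (Real.log (covNum U (rhoA A) δ)) ≤
          C * ((∑ k ∈ Finset.Icc 1 d,
              (∑ I ∈ Finset.univ.filter (fun I : Finset (PIdx d) => I.card = k),
                WUI A U I) ^ (1 / (k : ℝ)) * δ ^ (-(1 / (k : ℝ))))
            + ∑ k ∈ Finset.range (d + 1),
              (∑ I ∈ Finset.univ.filter (fun I : Finset (PIdx d) => I.card = k),
                VUI A T U I) ^ (1 / ((k : ℝ) + 1)) * δ ^ (-(1 / ((k : ℝ) + 1)))) := by
  have hC := covConst_pos d
  refine ⟨covConst d + Real.sqrt (covConst d) * (2 * d + 1), by positivity, ?_⟩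
  intro n m A T hne hbdd hsymm U hU ε hε δ hδ
  obtain ⟨R, hR⟩ := hbdd.exists_norm_le
  have hT : GoodT T (max R 0) :=
    { ne := hne
      nn := le_max_right _ _
      bd := fun t ht j => (norm_le_pi_norm t j).trans ((hR t ht).trans (le_max_left _ _))
      symm := fun t ht => by rw [hsymm]; simpa using ht }
  constructor
  · obtain ⟨c, hcard, hcov⟩ := exists_cover hT A hU hε
    refine (covNum_le c hcov).trans (hcard.trans (Real.exp_le_exp.2 ?_))
    exact mul_le_mul_of_nonneg_right (le_add_of_nonneg_right (by positivity)) (by positivity)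
  · change _ ≤ _ * entBracket A T U δ
    have hQ := entBracket_nonneg (U := U) hT A hδ
    rcases hQ.eq_or_lt with h0 | h0
    · rw [← h0, mul_zero]
      -- A vanishing bracket puts no restriction on the scale `s`, which then tends to infinity.
      refine le_of_forall_pos_le_add fun η hη => ?_
      have hs := sqrt_log_covNum_le hT A hU hδ
        (s := Real.sqrt (covConst d) / η) (by positivity)
        (by rw [← h0, mul_zero]; positivity)
      refine hs.trans (le_of_eq ?_)
      have : Real.sqrt (covConst d) ≠ 0 := by positivity
      field_simp
      ring
    · have hs := sqrt_log_covNum_le hT A hU hδ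
        (s := ((2 * (d : ℝ) + 1) * entBracket A T U δ)⁻¹) (by positivity)
        (by rw [mul_inv, mul_assoc, inv_mul_cancel₀ h0.ne', mul_one])
      rw [inv_inv] at hs
      refine hs.trans ?_
      rw [← mul_assoc]
      exact mul_le_mul_of_nonneg_right (le_add_of_nonneg_left hC.le) hQ
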